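/- arXiv:1703.02444 — 2 statements merged into one kernel-verified Lean document; each statement's English description precedes it below -/
import Mathlib

section
/- The (2m+1)-th root of the (2m+1)-dimensional Lebesgue volume of Q(P_m) tends to sqrt(2)/pi as m tends to infinity; equivalently, (A_{2m+1}/(2^m * (2m+1)!))^(1/(2m+1)) tends to sqrt(2)/pi as m tends to infinity, where A_{2m+1} is the Euler number counting alternating permutations of {1, ..., 2m+1}. -/
open MeasureTheory Filter

noncomputable section

/-- The standard relaxation `Q(G)` of the boolean quadric polytope of a graph `G`:
the set of points of `[0,1]^(V + E)` satisfying, for each edge `(i,j)`,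
`0 ≤ y_{ij}`, `y_{ij} ≤ x_i`, `y_{ij} ≤ x_j` and `x_i + x_j ≤ 1 + y_{ij}`. -/
def QSet {V : Type*} (G : SimpleGraph V) : Set ((V → ℝ) × (↥G.edgeSet → ℝ)) :=
  {p | (∀ i, p.1 i ∈ Set.Icc (0 : ℝ) 1) ∧ (∀ e, p.2 e ∈ Set.Icc (0 : ℝ) 1) ∧
    ∀ (i j : V) (h : G.Adj i j),
      0 ≤ p.2 ⟨s(i, j), (SimpleGraph.mem_edgeSet _).mpr h⟩ ∧
      p.2 ⟨s(i, j), (SimpleGraph.mem_edgeSet _).mpr h⟩ ≤ p.1 i ∧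
      p.2 ⟨s(i, j), (SimpleGraph.mem_edgeSet _).mpr h⟩ ≤ p.1 j ∧
      p.1 i + p.1 j ≤ 1 + p.2 ⟨s(i, j), (SimpleGraph.mem_edgeSet _).mpr h⟩}

/-- The Euler number `A k`: the number of alternating permutations `σ` of
`{1, …, k}`, i.e. with `σ 1 > σ 2 < σ 3 > σ 4 < ⋯` (here written 0-indexed). -/
def eulerNumber (k : ℕ) : ℕ :=
  Nat.card {σ : Equiv.Perm (Fin k) //
    ∀ (i : ℕ) (h : i + 1 < k),
      (Even i → σ ⟨i + 1, h⟩ < σ ⟨i, Nat.lt_of_succ_lt h⟩) ∧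
      (Odd i → σ ⟨i, Nat.lt_of_succ_lt h⟩ < σ ⟨i + 1, h⟩)}

/-- The path `P_m` with `m + 1` vertices and `m` edges. -/
def pathG (m : ℕ) : SimpleGraph (Fin (m + 1)) :=
  SimpleGraph.fromRel (fun i j => (i : ℕ) + 1 = (j : ℕ))

instance (m : ℕ) : DecidableRel (pathG m).Adj := fun i j =>
  decidable_of_iff _ (SimpleGraph.fromRel_adj _ i j).symm

lemma sandwich (V : ℕ → ℝ) (a b r : ℝ) (ha : 0 < a) (hb : 0 < b) (hr : 0 < r)
    (h1 : ∀ m, 1 ≤ m → a * r ^ m ≤ V m) (h2 : ∀ m, 1 ≤ m → V m ≤ b * r ^ m) :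
    Tendsto (fun m : ℕ => V m ^ (1 / (2 * (m : ℝ) + 1))) atTop (nhds (Real.sqrt r)) := by
  have key : ∀ c : ℝ, 0 < c → Tendsto (fun m : ℕ => (c * r ^ m) ^ (1 / (2 * (m : ℝ) + 1))) atTop
      (nhds (Real.sqrt r)) := by
    intro c hc
    have hd : Tendsto (fun m : ℕ => 2 * (m : ℝ) + 1) atTop atTop :=
      tendsto_atTop_add_const_right _ _ (tendsto_natCast_atTop_atTop.const_mul_atTop (by norm_num))
    have hi : Tendsto (fun m : ℕ => (2 * (m : ℝ) + 1)⁻¹) atTop (nhds 0) := hd.inv_tendsto_atTop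
    have h : Tendsto (fun m : ℕ => Real.exp ((Real.log c - Real.log r / 2) * (2 * (m : ℝ) + 1)⁻¹
        + Real.log r / 2)) atTop (nhds (Real.sqrt r)) := by
      have : Real.sqrt r = Real.exp ((Real.log c - Real.log r / 2) * 0 + Real.log r / 2) := by
        rw [← Real.log_sqrt hr.le]
        simp [Real.exp_log (Real.sqrt_pos.2 hr)]
      rw [this]
      exact (Real.continuous_exp.tendsto _).comp ((hi.const_mul _).add_const _)
    refine h.congr fun m => ?_
    have hp : 0 < c * r ^ m := by positivity
    rw [Real.rpow_def_of_pos hp, Real.log_mul hc.ne' (by positivity), Real.log_pow]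
    congr 1
    have : (2 * (m : ℝ) + 1) ≠ 0 := by positivity
    field_simp
    ring
  refine tendsto_of_tendsto_of_tendsto_of_le_of_le' (key a ha) (key b hb) ?_ ?_
  · filter_upwards [eventually_ge_atTop 1] with m hm
    exact Real.rpow_le_rpow (by positivity) (h1 m hm) (by positivity)
  · filter_upwards [eventually_ge_atTop 1] with m hm
    exact Real.rpow_le_rpow (le_trans (by positivity) (h1 m hm)) (h2 m hm) (by positivity)

/-- chain functional -/
noncomputable def chainI (w : ℝ → ℝ → ENNReal) (μ : Measure ℝ) (n : ℕ) (f : ℝ → ENNReal) : ENNReal :=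
  ∫⁻ u : Fin (n + 1) → ℝ, f (u 0) * ∏ i : Fin n, w (u i.castSucc) (u i.succ)
    ∂(Measure.pi fun _ => μ)

lemma chainI_zero (w : ℝ → ℝ → ENNReal) (μ : Measure ℝ) [IsProbabilityMeasure μ]
    (f : ℝ → ENNReal) (hf : Measurable f) : chainI w μ 0 f = ∫⁻ x, f x ∂μ := by
  simp only [chainI, Finset.univ_eq_empty, Finset.prod_empty, mul_one]
  exact (measurePreserving_eval (fun _ : Fin 1 => μ) 0).lintegral_comp hf

lemma chain_meas (w : ℝ → ℝ → ENNReal) (hw : Measurable (Function.uncurry w)) (k : ℕ)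
    (f : ℝ → ENNReal) (hf : Measurable f) :
    Measurable (fun u : Fin (k + 1) → ℝ =>
      f (u 0) * ∏ i : Fin k, w (u i.castSucc) (u i.succ)) := by
  refine (hf.comp (measurable_pi_apply 0)).mul (Finset.measurable_fun_prod _ fun i _ => ?_)
  have : Measurable fun u : Fin (k + 1) → ℝ => (u i.castSucc, u i.succ) :=
    (measurable_pi_apply _).prodMk (measurable_pi_apply _)
  exact hw.comp this

lemma chainI_succ (w : ℝ → ℝ → ENNReal) (hw : Measurable (Function.uncurry w))
    (μ : Measure ℝ) [IsProbabilityMeasure μ] (n : ℕ)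
    (f : ℝ → ENNReal) (hf : Measurable f) :
    chainI w μ (n + 1) f = chainI w μ n (fun y => ∫⁻ x, f x * w x y ∂μ) := by
  unfold chainI
  have h := (measurePreserving_piFinSuccAbove (fun _ : Fin (n + 2) => μ) 0).symm
  rw [← h.lintegral_comp (chain_meas w hw (n + 1) f hf), lintegral_prod_symm]
  · refine lintegral_congr fun u => ?_
    rw [← lintegral_mul_const]
    · refine lintegral_congr fun x => ?_
      simp [Fin.prod_univ_succ, mul_assoc, MeasurableEquiv.piFinSuccAbove]
    · exact hf.mul (hw.comp (measurable_id.prodMk measurable_const))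
  · exact ((chain_meas w hw (n + 1) f hf).comp h.measurable).aemeasurable

lemma chainI_mono (w : ℝ → ℝ → ENNReal) (μ : Measure ℝ) [IsProbabilityMeasure μ] (n : ℕ)
    (f g : ℝ → ENNReal) (h : ∀ᵐ x ∂μ, f x ≤ g x) : chainI w μ n f ≤ chainI w μ n g := by
  refine lintegral_mono_ae ?_
  have := (measurePreserving_eval (fun _ : Fin (n + 1) => μ) 0).quasiMeasurePreserving.ae h
  filter_upwards [this] with u hu
  exact mul_le_mul_left hu _

lemma chain_eig (w : ℝ → ℝ → ENNReal) (hw : Measurable (Function.uncurry w))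
    (μ : Measure ℝ) [IsProbabilityMeasure μ] (φ : ℝ → ENNReal) (hφ : Measurable φ) (r : ENNReal)
    (h1 : ∀ᵐ y ∂μ, ∫⁻ x, φ x * w x y ∂μ = r * φ y) (n : ℕ) :
    chainI w μ n φ = r ^ n * ∫⁻ x, φ x ∂μ := by
  induction n with
  | zero => simp [chainI_zero w μ φ hφ]
  | succ n ih =>
    rw [chainI_succ w hw μ n φ hφ]
    have : chainI w μ n (fun y => ∫⁻ x, φ x * w x y ∂μ) = chainI w μ n (fun y => r * φ y) := 
      le_antisymm (chainI_mono _ _ _ _ _ (h1.mono fun _ h => h.le))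
       (chainI_mono _ _ _ _ _ (h1.mono fun _ h => h.ge))
    rw [this, pow_succ', mul_assoc, ← ih]
    unfold chainI
    rw [← lintegral_const_mul]
    · simp only [mul_assoc]
    · exact chain_meas w hw n φ hφ

lemma chain_bounds (w : ℝ → ℝ → ENNReal) (hw : Measurable (Function.uncurry w))
    (μ : Measure ℝ) [IsProbabilityMeasure μ] (φ : ℝ → ENNReal) (hφ : Measurable φ) (r : ENNReal)
    (h1 : ∀ᵐ y ∂μ, ∫⁻ x, φ x * w x y ∂μ = r * φ y)
    (h2 : ∀ᵐ y ∂μ, φ y ≤ 1) (h3 : ∀ᵐ y ∂μ, ∫⁻ x, w x y ∂μ ≤ φ y) (n : ℕ) :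
    r ^ n * ∫⁻ x, φ x ∂μ ≤ chainI w μ n 1 ∧ chainI w μ (n + 1) 1 ≤ r ^ n * ∫⁻ x, φ x ∂μ := by
  rw [← chain_eig w hw μ φ hφ r h1]
  refine ⟨chainI_mono _ _ _ _ _ h2, ?_⟩
  rw [chainI_succ w hw μ n 1 measurable_one]
  refine chainI_mono _ _ _ _ _ ?_
  simpa using h3

/-- uniform measure on the unit interval -/
abbrev uni : Measure ℝ := volume.restrict (Set.Icc (0 : ℝ) 1)

instance : IsProbabilityMeasure uni := ⟨by simp [uni]⟩

lemma lint_uni (f : ℝ → ℝ) (hf : Continuous f) (h0 : ∀ x ∈ Set.Icc (0 : ℝ) 1, 0 ≤ f x) :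
    ∫⁻ x, ENNReal.ofReal (f x) ∂uni = ENNReal.ofReal (∫ x in (0 : ℝ)..1, f x) := by
  rw [intervalIntegral.integral_of_le zero_le_one, ← integral_Icc_eq_integral_Ioc,
    ofReal_integral_eq_lintegral_ofReal]
  · exact hf.integrableOn_Icc
  · exact (ae_restrict_iff' measurableSet_Icc).2 (ae_of_all _ h0)

/-- kernel for Q -/
def kerQ (x y : ℝ) : ENNReal := ENNReal.ofReal (min x y - max 0 (x + y - 1))

/-- kernel for alternating permutations -/
def kerA (x y : ℝ) : ENNReal := if x + y < 1 then 1 else 0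

lemma measurable_kerQ : Measurable (Function.uncurry kerQ) := by
  unfold kerQ Function.uncurry
  fun_prop

lemma measurable_kerA : Measurable (Function.uncurry kerA) := by
  unfold kerA Function.uncurry
  refine Measurable.ite ?_ measurable_const measurable_const
  exact measurableSet_lt (by fun_prop) (by fun_prop)

lemma ker_nonneg {x y : ℝ} (hx : x ∈ Set.Icc (0 : ℝ) 1) (hy : y ∈ Set.Icc (0 : ℝ) 1) :
    0 ≤ min x y - max 0 (x + y - 1) := by
  obtain ⟨a, b⟩ := hx
  obtain ⟨c, d⟩ := hy
  rw [sub_nonneg]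
  exact max_le (le_min a c) (le_min (by linarith) (by linarith))

lemma sinpi_nonneg {x : ℝ} (hx : x ∈ Set.Icc (0 : ℝ) 1) : 0 ≤ Real.sin (Real.pi * x) :=
  Real.sin_nonneg_of_nonneg_of_le_pi (mul_nonneg Real.pi_pos.le hx.1)
    (by nlinarith [Real.pi_pos, hx.2])

lemma int_kerQ (y : ℝ) (hy : y ∈ Set.Icc (0 : ℝ) 1) :
    ∫ x in (0 : ℝ)..1, Real.sin (Real.pi * x) * (min x y - max 0 (x + y - 1)) =
      2 / Real.pi ^ 2 * Real.sin (Real.pi * y) := by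
  have hpi := Real.pi_ne_zero
  obtain ⟨h0, h1⟩ := hy
  have hii : ∀ (g : ℝ → ℝ), Continuous g → ∀ a b, IntervalIntegrable g volume a b :=
    fun g hg a b => hg.intervalIntegrable a b
  have ftc : ∀ (c e a b : ℝ), ∫ x in a..b, Real.sin (Real.pi * x) * (c * x + e) =
      (-(c * b + e) * Real.cos (Real.pi * b) / Real.pi
        + c * Real.sin (Real.pi * b) / Real.pi ^ 2) -
      (-(c * a + e) * Real.cos (Real.pi * a) / Real.pi
        + c * Real.sin (Real.pi * a) / Real.pi ^ 2) := by
    intro c e a b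
    refine intervalIntegral.integral_eq_sub_of_hasDerivAt
      (f := fun x => -(c * x + e) * Real.cos (Real.pi * x) / Real.pi
        + c * Real.sin (Real.pi * x) / Real.pi ^ 2) (fun x _ => ?_)
      (hii _ (by fun_prop) _ _)
    have hl : HasDerivAt (fun x : ℝ => Real.pi * x) Real.pi x := by
      simpa using (hasDerivAt_id x).const_mul Real.pi
    have hm : HasDerivAt (fun x : ℝ => -(c * x + e)) (-c) x := by
      have h := (((hasDerivAt_id x).const_mul c).add_const e).neg
      rw [mul_one] at h
      exact h
    have := ((hm.mul hl.cos).div_const Real.pi).add ((hl.sin.const_mul c).div_const (Real.pi ^ 2))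
    refine this.congr_deriv ?_
    field_simp
    ring
  have e1 : ∫ x in (0 : ℝ)..1, Real.sin (Real.pi * x) * (min x y - max 0 (x + y - 1)) =
      (∫ x in (0 : ℝ)..1, Real.sin (Real.pi * x) * min x y) -
      ∫ x in (0 : ℝ)..1, Real.sin (Real.pi * x) * max 0 (x + y - 1) := by
    rw [← intervalIntegral.integral_sub (hii _ (by fun_prop) _ _) (hii _ (by fun_prop) _ _)]
    simp only [mul_sub]
  have e2 : ∫ x in (0 : ℝ)..1, Real.sin (Real.pi * x) * min x y =
      (∫ x in (0 : ℝ)..y, Real.sin (Real.pi * x) * (1 * x + 0)) +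
      ∫ x in y..1, Real.sin (Real.pi * x) * (0 * x + y) := by
    rw [← intervalIntegral.integral_add_adjacent_intervals (b := y) (hii _ (by fun_prop) _ _)
      (hii _ (by fun_prop) _ _)]
    congr 1
    · refine intervalIntegral.integral_congr fun x hx => ?_
      rw [Set.uIcc_of_le h0] at hx
      simp [min_eq_left hx.2]
    · refine intervalIntegral.integral_congr fun x hx => ?_
      rw [Set.uIcc_of_le h1] at hx
      simp [min_eq_right hx.1]
  have e3 : ∫ x in (0 : ℝ)..1, Real.sin (Real.pi * x) * max 0 (x + y - 1) =
      (∫ x in (0 : ℝ)..(1 - y), Real.sin (Real.pi * x) * (0 * x + 0)) +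
      ∫ x in (1 - y)..1, Real.sin (Real.pi * x) * (1 * x + (y - 1)) := by
    rw [← intervalIntegral.integral_add_adjacent_intervals (b := 1 - y) (hii _ (by fun_prop) _ _)
      (hii _ (by fun_prop) _ _)]
    congr 1
    · refine intervalIntegral.integral_congr fun x hx => ?_
      rw [Set.uIcc_of_le (by linarith)] at hx
      have := max_eq_left (show x + y - 1 ≤ 0 by linarith [hx.2])
      simp [this]
    · refine intervalIntegral.integral_congr fun x hx => ?_
      rw [Set.uIcc_of_le (by linarith)] at hx
      have := max_eq_right (show 0 ≤ x + y - 1 by linarith [hx.1])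
      simp only [this]
      ring
  rw [e1, e2, e3, ftc, ftc, ftc, ftc]
  have s1 : Real.sin (Real.pi * (1 - y)) = Real.sin (Real.pi * y) := by
    rw [mul_sub, mul_one, Real.sin_pi_sub]
  have s2 : Real.cos (Real.pi * (1 - y)) = - Real.cos (Real.pi * y) := by
    rw [mul_sub, mul_one, Real.cos_pi_sub]
  rw [s1, s2]
  simp only [mul_one, mul_zero, Real.sin_zero, Real.cos_zero, Real.sin_pi, Real.cos_pi]
  field_simp
  ring

lemma kerQ_le {x y : ℝ} (hx : x ∈ Set.Icc (0 : ℝ) 1) (hy : y ∈ Set.Icc (0 : ℝ) 1) :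
    min x y - max 0 (x + y - 1) ≤ Real.sin (Real.pi * y) := by
  have hp := Real.pi_pos
  obtain ⟨a, b⟩ := hx
  obtain ⟨c, d⟩ := hy
  have m1 : min x y ≤ x := min_le_left _ _
  have m2 : min x y ≤ y := min_le_right _ _
  have m3 : 0 ≤ max 0 (x + y - 1) := le_max_left _ _
  have m4 : x + y - 1 ≤ max 0 (x + y - 1) := le_max_right _ _
  rcases le_total y (1 / 2) with h | h
  · have := Real.mul_le_sin (x := Real.pi * y) (by positivity) (by nlinarith)
    have e : 2 / Real.pi * (Real.pi * y) = 2 * y := by field_simp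
    linarith
  · have := Real.mul_le_sin (x := Real.pi * (1 - y)) (mul_nonneg hp.le (by linarith)) (by nlinarith)
    have e : 2 / Real.pi * (Real.pi * (1 - y)) = 2 * (1 - y) := by field_simp
    rw [mul_sub Real.pi 1 y, mul_one, Real.sin_pi_sub, ← mul_one_sub, e] at this
    linarith

lemma ae_uni {p : ℝ → Prop} (h : ∀ x ∈ Set.Icc (0 : ℝ) 1, p x) : ∀ᵐ x ∂uni, p x :=
  (ae_restrict_iff' measurableSet_Icc).2 (ae_of_all _ h)

lemma boundsQ : ∃ L : ℝ, 0 < L ∧ ∀ n,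
    ENNReal.ofReal (L * (2 / Real.pi ^ 2) ^ n) ≤ chainI kerQ uni n 1 ∧
    chainI kerQ uni (n + 1) 1 ≤ ENNReal.ofReal (L * (2 / Real.pi ^ 2) ^ n) := by
  have hp := Real.pi_pos
  have hc : Continuous fun x => Real.sin (Real.pi * x) := by fun_prop
  refine ⟨∫ x in (0 : ℝ)..1, Real.sin (Real.pi * x), ?_, fun n => ?_⟩
  · refine intervalIntegral.intervalIntegral_pos_of_pos_on (hc.intervalIntegrable _ _) ?_ one_pos
    intro x hx
    exact Real.sin_pos_of_pos_of_lt_pi (mul_pos hp hx.1) (by nlinarith [hx.2])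
  · have := chain_bounds kerQ measurable_kerQ uni (fun x => ENNReal.ofReal (Real.sin (Real.pi * x)))
      (by fun_prop) (ENNReal.ofReal (2 / Real.pi ^ 2)) ?_ ?_ ?_ n
    · rw [lint_uni _ hc fun x => sinpi_nonneg, ← ENNReal.ofReal_pow (by positivity),
        ← ENNReal.ofReal_mul (by positivity), mul_comm] at this
      exact this
    · refine ae_uni fun y hy => ?_
      rw [← ENNReal.ofReal_mul (by positivity), ← int_kerQ y hy, ← lint_uni _ (by fun_prop)]
      · refine lintegral_congr_ae (ae_uni fun x hx => ?_)
        beta_reduce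
        rw [ENNReal.ofReal_mul (sinpi_nonneg hx)]
        rfl
      · exact fun x hx => mul_nonneg (sinpi_nonneg hx) (ker_nonneg hx hy)
    · exact ae_uni fun y hy => ENNReal.ofReal_le_one.2 (Real.sin_le_one _)
    · refine ae_uni fun y hy => ?_
      calc _ ≤ ∫⁻ x, ENNReal.ofReal (Real.sin (Real.pi * y)) ∂uni :=
            lintegral_mono_ae (ae_uni fun x hx => ENNReal.ofReal_le_ofReal (kerQ_le hx hy))
        _ = _ := by simp

lemma cospi_nonneg {x : ℝ} (hx : x ∈ Set.Icc (0 : ℝ) 1) : 0 ≤ Real.cos (Real.pi / 2 * x) :=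
  Real.cos_nonneg_of_mem_Icc ⟨by nlinarith [Real.pi_pos, hx.1], by nlinarith [Real.pi_pos, hx.2]⟩

lemma lint_kerA (f : ℝ → ℝ) (hf : Continuous f) (h0 : ∀ x ∈ Set.Icc (0 : ℝ) 1, 0 ≤ f x) (y : ℝ)
    (hy : y ∈ Set.Icc (0 : ℝ) 1) :
    ∫⁻ x, ENNReal.ofReal (f x) * kerA x y ∂uni = ENNReal.ofReal (∫ x in (0 : ℝ)..(1 - y), f x) := by
  obtain ⟨a, b⟩ := hy
  rw [intervalIntegral.integral_of_le (by linarith), integral_Ioc_eq_integral_Ioo,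
    ← integral_Ico_eq_integral_Ioo, ofReal_integral_eq_lintegral_ofReal]
  · have : ∀ x, ENNReal.ofReal (f x) * kerA x y =
        (Set.Iio (1 - y)).indicator (fun x => ENNReal.ofReal (f x)) x := by
      intro x
      by_cases h : x < 1 - y
      · have : x + y < 1 := by linarith
        simp [kerA, h, this]
      · have : ¬ x + y < 1 := by intro; apply h; linarith
        simp [kerA, h, this]
    simp only [this]
    rw [lintegral_indicator measurableSet_Iio, Measure.restrict_restrict measurableSet_Iio]
    congr 2
    ext x
    simp only [Set.mem_inter_iff, Set.mem_Iio, Set.mem_Icc, Set.mem_Ico]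
    constructor
    · rintro ⟨h, h', _⟩
      exact ⟨h', h⟩
    · rintro ⟨h, h'⟩
      exact ⟨h', h, by linarith⟩
  · exact (hf.integrableOn_Icc (a := 0) (b := 1 - y)).mono_set Set.Ico_subset_Icc_self
  · exact (ae_restrict_iff' measurableSet_Ico).2
      (ae_of_all _ fun x hx => h0 x ⟨hx.1, by linarith [hx.2]⟩)

lemma boundsA : ∃ L : ℝ, 0 < L ∧ ∀ n,
    ENNReal.ofReal (L * (2 / Real.pi) ^ n) ≤ chainI kerA uni n 1 ∧
    chainI kerA uni (n + 1) 1 ≤ ENNReal.ofReal (L * (2 / Real.pi) ^ n) := by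
  have hp := Real.pi_pos
  have hc : Continuous fun x => Real.cos (Real.pi / 2 * x) := by fun_prop
  refine ⟨∫ x in (0 : ℝ)..1, Real.cos (Real.pi / 2 * x), ?_, fun n => ?_⟩
  · refine intervalIntegral.intervalIntegral_pos_of_pos_on (hc.intervalIntegrable _ _) ?_ one_pos
    intro x hx
    exact Real.cos_pos_of_mem_Ioo ⟨by nlinarith [hx.1], by nlinarith [hx.2]⟩
  · have hcs : ∀ y, Real.sin (Real.pi / 2 * (1 - y)) = Real.cos (Real.pi / 2 * y) := by
      intro y
      rw [mul_sub, mul_one, Real.sin_pi_div_two_sub]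
    have := chain_bounds kerA measurable_kerA uni
      (fun x => ENNReal.ofReal (Real.cos (Real.pi / 2 * x)))
      (by fun_prop) (ENNReal.ofReal (2 / Real.pi)) ?_ ?_ ?_ n
    · rw [lint_uni _ hc fun x => cospi_nonneg, ← ENNReal.ofReal_pow (by positivity),
        ← ENNReal.ofReal_mul (by positivity), mul_comm] at this
      exact this
    · refine ae_uni fun y hy => ?_
      rw [← ENNReal.ofReal_mul (by positivity), lint_kerA _ hc (fun x => cospi_nonneg) y hy,
        intervalIntegral.integral_comp_mul_left (fun x => Real.cos x) (by positivity),
        integral_cos, hcs]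
      simp
    · exact ae_uni fun y hy => ENNReal.ofReal_le_one.2 (Real.cos_le_one _)
    · refine ae_uni fun y hy => ?_
      have := lint_kerA (fun _ => 1) continuous_const (fun _ _ => zero_le_one) y hy
      simp only [ENNReal.ofReal_one, one_mul] at this
      rw [this]
      refine ENNReal.ofReal_le_ofReal ?_
      rw [← hcs]
      have := Real.mul_le_sin (x := Real.pi / 2 * (1 - y))
        (mul_nonneg (by positivity) (by linarith [hy.2])) (by nlinarith [hy.1])
      have e : 2 / Real.pi * (Real.pi / 2 * (1 - y)) = 1 - y := by field_simp
      rw [e] at this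
      simpa using this

lemma pathG_adj (m : ℕ) (i : Fin m) : (pathG m).Adj i.castSucc i.succ := by
  rw [pathG, SimpleGraph.fromRel_adj]
  refine ⟨?_, Or.inl (by simp)⟩
  intro h
  have := congrArg Fin.val h
  simp at this

/-- the `i`-th edge -/
def pedge (m : ℕ) (i : Fin m) : ↥(pathG m).edgeSet :=
  ⟨s(i.castSucc, i.succ), (SimpleGraph.mem_edgeSet _).mpr (pathG_adj m i)⟩

lemma adj_cases (m : ℕ) (i j : Fin (m + 1)) (h : (pathG m).Adj i j) :
    ∃ k : Fin m, (i = k.castSucc ∧ j = k.succ) ∨ (j = k.castSucc ∧ i = k.succ) := by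
  rw [pathG, SimpleGraph.fromRel_adj] at h
  rcases h.2 with h | h
  · refine ⟨⟨i, by omega⟩, Or.inl ⟨rfl, ?_⟩⟩
    ext; simp; omega
  · refine ⟨⟨j, by omega⟩, Or.inr ⟨rfl, ?_⟩⟩
    ext; simp; omega

lemma pedge_bij (m : ℕ) : Function.Bijective (pedge m) := by
  constructor
  · intro i j h
    have h' := congrArg Subtype.val h
    simp only [pedge, Sym2.eq_iff] at h'
    rcases h' with ⟨h1, _⟩ | ⟨h1, h2⟩
    · exact Fin.castSucc_injective _ h1
    · have a := congrArg Fin.val h1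
      have b := congrArg Fin.val h2
      simp at a b
      omega
  · rintro ⟨e, he⟩
    induction e using Sym2.ind with
    | _ i j =>
      obtain ⟨k, ⟨rfl, rfl⟩ | ⟨rfl, rfl⟩⟩ := adj_cases m i j he
      · exact ⟨k, rfl⟩
      · exact ⟨k, Subtype.ext Sym2.eq_swap⟩

lemma mem_QSet_path (m : ℕ) (p : (Fin (m + 1) → ℝ) × (↥(pathG m).edgeSet → ℝ)) :
    p ∈ QSet (pathG m) ↔ (∀ i, p.1 i ∈ Set.Icc (0 : ℝ) 1) ∧
      ∀ i : Fin m, p.2 (pedge m i) ∈ Set.Icc (max 0 (p.1 i.castSucc + p.1 i.succ - 1))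
        (min (p.1 i.castSucc) (p.1 i.succ)) := by
  constructor
  · rintro ⟨h1, _, h3⟩
    refine ⟨h1, fun i => ?_⟩
    obtain ⟨a, b, c, d⟩ := h3 _ _ (pathG_adj m i)
    exact ⟨max_le a (by rw [sub_le_iff_le_add']; exact d), le_min b c⟩
  · rintro ⟨h1, h2⟩
    have key : ∀ i : Fin m, 0 ≤ p.2 (pedge m i) ∧ p.2 (pedge m i) ≤ p.1 i.castSucc ∧
        p.2 (pedge m i) ≤ p.1 i.succ ∧ p.1 i.castSucc + p.1 i.succ ≤ 1 + p.2 (pedge m i) := by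
      intro i
      obtain ⟨a, b⟩ := h2 i
      exact ⟨(le_max_left _ _).trans a, b.trans (min_le_left _ _), b.trans (min_le_right _ _),
        by have := (le_max_right _ _).trans a; linarith⟩
    refine ⟨h1, fun e => ?_, fun i j h => ?_⟩
    · obtain ⟨k, rfl⟩ := (pedge_bij m).2 e
      exact ⟨(key k).1, (key k).2.1.trans (h1 _).2⟩
    · obtain ⟨k, ⟨rfl, rfl⟩ | ⟨rfl, rfl⟩⟩ := adj_cases m i j h
      · exact key k
      · have e : (⟨s(k.succ, k.castSucc), (SimpleGraph.mem_edgeSet _).mpr h⟩ :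
            ↥(pathG m).edgeSet) = pedge m k := Subtype.ext Sym2.eq_swap
        rw [e, add_comm (p.1 k.succ)]
        obtain ⟨a, b, c, d⟩ := key k
        exact ⟨a, c, b, d⟩

lemma measurableSet_QSet_path (m : ℕ) : MeasurableSet (QSet (pathG m)) := by
  have : QSet (pathG m) = (⋂ i, {p | p.1 i ∈ Set.Icc (0 : ℝ) 1}) ∩
      ⋂ i : Fin m, ({p | max 0 (p.1 i.castSucc + p.1 i.succ - 1) ≤ p.2 (pedge m i)} ∩
        {p | p.2 (pedge m i) ≤ min (p.1 i.castSucc) (p.1 i.succ)}) := by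
    ext p
    simp only [mem_QSet_path, Set.mem_inter_iff, Set.mem_iInter, Set.mem_ofPred_eq, Set.mem_Icc]
  rw [this]
  refine (IsClosed.inter (isClosed_iInter fun i => ?_) (isClosed_iInter fun i => ?_)).measurableSet
  · exact isClosed_Icc.preimage (by fun_prop)
  · exact (isClosed_le (by fun_prop) (by fun_prop)).inter (isClosed_le (by fun_prop) (by fun_prop))

lemma pi_uni (n : ℕ) : (Measure.pi fun _ : Fin n => uni) =
    (volume : Measure (Fin n → ℝ)).restrict (Set.univ.pi fun _ => Set.Icc (0 : ℝ) 1) := by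
  rw [volume_pi, Measure.restrict_pi_pi]

lemma volume_QSet_path (m : ℕ) : volume (QSet (pathG m)) = chainI kerQ uni m 1 := by
  rw [Measure.volume_eq_prod, Measure.prod_apply (measurableSet_QSet_path m), chainI, pi_uni,
    ← lintegral_indicator (MeasurableSet.univ_pi fun _ => measurableSet_Icc)]
  refine lintegral_congr fun x => ?_
  by_cases hx : x ∈ Set.univ.pi fun _ : Fin (m + 1) => Set.Icc (0 : ℝ) 1
  · rw [Set.indicator_of_mem hx]
    set ι := (Equiv.ofBijective _ (pedge_bij m)) with hι
    have : Prod.mk x ⁻¹' QSet (pathG m) = Set.univ.pi fun e : ↥(pathG m).edgeSet =>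
        Set.Icc (max 0 (x (ι.symm e).castSucc + x (ι.symm e).succ - 1))
        (min (x (ι.symm e).castSucc) (x (ι.symm e).succ)) := by
      ext y
      rw [Set.mem_preimage, mem_QSet_path, Set.mem_univ_pi]
      rw [Set.mem_univ_pi] at hx
      constructor
      · rintro ⟨_, h⟩ e
        have := h (ι.symm e)
        have e' : pedge m (ι.symm e) = e := ι.apply_symm_apply e
        rw [e'] at this
        exact this
      · intro h
        refine ⟨hx, fun i => ?_⟩
        have := h (ι i)
        rw [ι.symm_apply_apply] at this
        exact this
    rw [this, volume_pi, Measure.pi_pi]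
    simp only [Real.volume_Icc]
    rw [Equiv.prod_comp ι.symm (fun i : Fin m => ENNReal.ofReal (min (x i.castSucc) (x i.succ) -
      max 0 (x i.castSucc + x i.succ - 1)))]
    simp [kerQ]
  · rw [Set.indicator_of_notMem hx]
    have : Prod.mk x ⁻¹' QSet (pathG m) = ∅ := by
      ext y
      rw [Set.mem_preimage, mem_QSet_path]
      simp only [Set.mem_empty_iff_false, iff_false]
      exact fun h => hx (Set.mem_univ_pi.2 h.1)
    rw [this, measure_empty]

/-- region of points ordered as `σ` -/
def ordR (n : ℕ) (σ : Equiv.Perm (Fin n)) : Set (Fin n → ℝ) :=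
  {u | ∀ i j, σ i < σ j → u i < u j}

/-- the alternation condition -/
def Alt {α : Type*} [LT α] (n : ℕ) (u : Fin n → α) : Prop :=
  ∀ (i : ℕ) (h : i + 1 < n),
      (Even i → u ⟨i + 1, h⟩ < u ⟨i, Nat.lt_of_succ_lt h⟩) ∧
      (Odd i → u ⟨i, Nat.lt_of_succ_lt h⟩ < u ⟨i + 1, h⟩)

lemma measurableSet_ordR (n : ℕ) (σ : Equiv.Perm (Fin n)) : MeasurableSet (ordR n σ) := by
  have : ordR n σ = ⋂ i, ⋂ j, ⋂ (_ : σ i < σ j), {u | u i < u j} := by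
    ext u; simp [ordR]
  rw [this]
  exact MeasurableSet.iInter fun i => MeasurableSet.iInter fun j => MeasurableSet.iInter fun _ =>
    measurableSet_lt (measurable_pi_apply i) (measurable_pi_apply j)

lemma ordR_iff {n : ℕ} {σ : Equiv.Perm (Fin n)} {u : Fin n → ℝ} (hu : u ∈ ordR n σ) (i j : Fin n) :
    u i < u j ↔ σ i < σ j := by
  refine ⟨fun h => ?_, hu i j⟩
  by_contra hn
  rcases (not_lt.1 hn).lt_or_eq with h' | h'
  · exact lt_asymm h (hu _ _ h')
  · rw [σ.injective h'] at h
    exact lt_irrefl _ h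

lemma ordR_disj (n : ℕ) : Pairwise (Function.onFun Disjoint (ordR n)) := by
  intro σ τ hne
  refine Set.disjoint_left.2 fun u h1 h2 => hne ?_
  have hs : StrictMono (fun i => τ (σ.symm i)) := by
    intro i j hij
    rw [← ordR_iff h2, ordR_iff h1]
    simpa using hij
  have h3 : ∀ i, τ (σ.symm i) = i := by
    intro i
    have := Subsingleton.elim (hs.orderIsoOfSurjective _ (τ.surjective.comp σ.symm.surjective))
      (OrderIso.refl (Fin n))
    exact congrArg (fun f : Fin n ≃o Fin n => f i) this
  ext i
  have := h3 (σ i)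
  rw [σ.symm_apply_apply] at this
  rw [this]

lemma exists_ordR (n : ℕ) (u : Fin n → ℝ) (hu : Function.Injective u) : ∃ σ, u ∈ ordR n σ := by
  refine ⟨(Tuple.sort u).symm, fun i j h => ?_⟩
  have hm : StrictMono (u ∘ Tuple.sort u) :=
    (Tuple.monotone_sort u).strictMono_of_injective (hu.comp (Tuple.sort u).injective)
  simpa using hm h

lemma ae_inj (n : ℕ) : ∀ᵐ u ∂(Measure.pi fun _ : Fin n => uni), Function.Injective u := by
  rw [pi_uni]
  refine ae_restrict_of_ae ?_
  have : ∀ i j : Fin n, i ≠ j → ∀ᵐ u : Fin n → ℝ, u i ≠ u j := by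
    intro i j hij
    let S : Submodule ℝ (Fin n → ℝ) :=
      LinearMap.ker (LinearMap.proj (R := ℝ) (φ := fun _ : Fin n => ℝ) i - LinearMap.proj j)
    have hS : S ≠ ⊤ := by
      intro h
      have : (Pi.single i (1 : ℝ) : Fin n → ℝ) ∈ S := h ▸ Submodule.mem_top
      simp [S, hij.symm] at this
    have h0 := Measure.addHaar_submodule (volume : Measure (Fin n → ℝ)) S hS
    rw [ae_iff]
    convert h0 using 2
    ext u
    simp [S, sub_eq_zero]
  have h : ∀ᵐ u : Fin n → ℝ, ∀ i j : Fin n, i ≠ j → u i ≠ u j := by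
    rw [ae_all_iff]; intro i
    rw [ae_all_iff]; intro j
    by_cases hij : i = j
    · simp [hij]
    · filter_upwards [this i j hij] with u hu _
      exact hu
  filter_upwards [h] with u hu i j hij
  by_contra hne
  exact hu i j hne hij

lemma measure_ordR_eq (n : ℕ) (σ : Equiv.Perm (Fin n)) :
    (Measure.pi fun _ : Fin n => uni) (ordR n σ) = (Measure.pi fun _ : Fin n => uni) (ordR n 1) := by
  have h := measurePreserving_piCongrLeft (α := fun _ : Fin n => ℝ) (fun _ : Fin n => uni) σ
  rw [← h.measure_preimage (measurableSet_ordR n 1).nullMeasurableSet]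
  congr 1
  ext u
  have : ∀ i, (MeasurableEquiv.piCongrLeft (fun _ : Fin n => ℝ) σ) u i = u (σ.symm i) := by
    intro i
    obtain ⟨k, rfl⟩ := σ.surjective i
    rw [MeasurableEquiv.coe_piCongrLeft]
    simp [Equiv.piCongrLeft_apply_apply]
  simp only [ordR, Set.mem_preimage, Set.mem_ofPred_eq, this, Equiv.Perm.coe_one, id]
  constructor
  · intro h i j hij
    exact h _ _ (by simpa using hij)
  · intro h i j hij
    simpa using h _ _ hij

lemma measure_ordR (n : ℕ) (σ : Equiv.Perm (Fin n)) :
    (Measure.pi fun _ : Fin n => uni) (ordR n σ) = ((n.factorial : ℕ) : ENNReal)⁻¹ := by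
  have h1 : (Measure.pi fun _ : Fin n => uni) (⋃ σ, ordR n σ) = 1 := by
    rw [prob_compl_eq_zero_iff (MeasurableSet.iUnion (measurableSet_ordR n)) |>.symm]
    refine measure_mono_null ?_ (ae_iff.1 (ae_inj n))
    intro u hu hinj
    obtain ⟨τ, hτ⟩ := exists_ordR n u hinj
    exact hu (Set.mem_iUnion.2 ⟨τ, hτ⟩)
  rw [measure_iUnion (ordR_disj n) (measurableSet_ordR n), tsum_fintype] at h1
  rw [measure_ordR_eq]
  simp only [measure_ordR_eq n, Finset.sum_const, Finset.card_univ, Fintype.card_perm,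
    Fintype.card_fin, nsmul_eq_mul] at h1
  exact ENNReal.eq_inv_of_mul_eq_one_left (by rw [mul_comm]; exact h1)

lemma alt_iff {n : ℕ} {σ : Equiv.Perm (Fin n)} {u : Fin n → ℝ} (hu : u ∈ ordR n σ) :
    Alt n u ↔ Alt n σ := by
  simp only [Alt, ordR_iff hu]

lemma measure_alt (n : ℕ) : (Measure.pi fun _ : Fin n => uni) {u | Alt n u} =
    (eulerNumber n : ENNReal) * ((n.factorial : ℕ) : ENNReal)⁻¹ := by
  classical
  have h1 : {u : Fin n → ℝ | Alt n u} =ᵐ[Measure.pi fun _ : Fin n => uni]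
      ⋃ σ : {σ : Equiv.Perm (Fin n) // Alt n σ}, ordR n σ.1 := by
    filter_upwards [ae_inj n] with u hu
    obtain ⟨τ, hτ⟩ := exists_ordR n u hu
    refine propext ⟨fun h => ?_, fun h => ?_⟩
    · exact Set.mem_iUnion.2 ⟨⟨τ, (alt_iff hτ).1 h⟩, hτ⟩
    · obtain ⟨⟨s, hs⟩, h⟩ := Set.mem_iUnion.1 h
      exact (alt_iff h).2 hs
  have h2 : Pairwise (Function.onFun Disjoint
      fun σ : {σ : Equiv.Perm (Fin n) // Alt n σ} => ordR n σ.1) :=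
    fun a b hab => ordR_disj n (fun h => hab (Subtype.ext h))
  have h3 : ∀ σ : {σ : Equiv.Perm (Fin n) // Alt n σ}, MeasurableSet (ordR n σ.1) :=
    fun σ => measurableSet_ordR n σ.1
  rw [measure_congr h1, measure_iUnion h2 h3, tsum_fintype]
  simp only [measure_ordR, Finset.sum_const, nsmul_eq_mul, Finset.card_univ]
  rw [eulerNumber, ← Nat.card_eq_fintype_card]
  rfl

lemma mp_flip : MeasurePreserving (fun x : ℝ => 1 - x) uni uni := by
  have h := (Measure.measurePreserving_sub_left (volume : Measure ℝ) 1).restrict_preimage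
    (s := Set.Icc (0 : ℝ) 1) measurableSet_Icc
  have e : (fun x : ℝ => 1 - x) ⁻¹' Set.Icc (0 : ℝ) 1 = Set.Icc 0 1 := by simp
  rw [e] at h
  exact h

lemma chain_alt (n : ℕ) : chainI kerA uni n 1 =
    (eulerNumber (n + 1) : ENNReal) * (((n + 1).factorial : ℕ) : ENNReal)⁻¹ := by
  classical
  let B : Set (Fin (n + 1) → ℝ) := {v | ∀ i : Fin n, v i.castSucc + v i.succ < 1}
  have hB : MeasurableSet B := by
    have : B = ⋂ i : Fin n, {v | v i.castSucc + v i.succ < 1} := by ext; simp [B]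
    rw [this]
    exact MeasurableSet.iInter fun i => measurableSet_lt (by fun_prop) (by fun_prop)
  have h1 : chainI kerA uni n 1 = (Measure.pi fun _ : Fin (n + 1) => uni) B := by
    rw [chainI, ← lintegral_indicator_one hB]
    refine lintegral_congr fun u => ?_
    by_cases hu : u ∈ B
    · rw [Set.indicator_of_mem hu]
      have : ∀ i : Fin n, u i.castSucc + u i.succ < 1 := hu
      simp [kerA, this]
    · rw [Set.indicator_of_notMem hu]
      have : ∃ i : Fin n, ¬ u i.castSucc + u i.succ < 1 := by
        by_contra hc
        push Not at hc
        exact hu hc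
      obtain ⟨i, hi⟩ := this
      rw [Finset.prod_eq_zero (Finset.mem_univ i) (by simp [kerA, not_lt.1 hi]), mul_zero]
  have hmp : ∀ i : Fin (n + 1), MeasurePreserving
      ((fun i : Fin (n + 1) => if Even (i : ℕ) then (fun x : ℝ => 1 - x) else id) i) uni uni := by
    intro i
    by_cases h : Even (i : ℕ)
    · simp only [h, if_true]; exact mp_flip
    · simp only [h, if_false]; exact MeasurePreserving.id _
  have h2 := measurePreserving_pi (fun _ => uni) (fun _ => uni) hmp
  rw [h1, ← measure_alt, ← h2.measure_preimage hB.nullMeasurableSet]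
  congr 1
  ext u
  simp only [B, Set.mem_preimage, Set.mem_ofPred_eq, Alt]
  constructor
  · intro h i hi
    have := h ⟨i, by omega⟩
    simp only [Fin.castSucc_mk, Fin.succ_mk] at this
    constructor
    · intro he
      have ho : ¬ Even (i + 1) := by simpa [Nat.even_add_one] using he
      simp only [he, ho, if_true, if_false, id] at this
      linarith
    · intro ho
      have he : ¬ Even i := Nat.not_even_iff_odd.2 ho
      have ho' : Even (i + 1) := by simpa [Nat.even_add_one] using ho
      simp only [he, ho', if_true, if_false, id] at this
      linarith
  · intro h i
    have := h i (by omega)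
    have e1 : (⟨(i : ℕ) + 1, by omega⟩ : Fin (n + 1)) = i.succ := rfl
    have e2 : (⟨(i : ℕ), by omega⟩ : Fin (n + 1)) = i.castSucc := rfl
    rw [e1, e2] at this
    by_cases he : Even (i : ℕ)
    · have ho : ¬ Even ((i : ℕ) + 1) := by simpa [Nat.even_add_one] using he
      simp only [Fin.val_castSucc, Fin.val_succ, he, ho, if_true, if_false, id]
      linarith [this.1 he]
    · have ho : Even ((i : ℕ) + 1) := by simpa [Nat.even_add_one] using he
      simp only [Fin.val_castSucc, Fin.val_succ, he, ho, if_true, if_false, id]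
      linarith [this.2 (Nat.not_even_iff_odd.1 he)]

lemma sqrt_eq : Real.sqrt (2 / Real.pi ^ 2) = Real.sqrt 2 / Real.pi := by
  rw [Real.sqrt_div (by norm_num), Real.sqrt_sq Real.pi_pos.le]

lemma toReal_bounds {a b : ℝ} {c : ENNReal} (hb : 0 ≤ b) (h1 : ENNReal.ofReal a ≤ c)
    (h2 : c ≤ ENNReal.ofReal b) : a ≤ c.toReal ∧ c.toReal ≤ b :=
  ⟨(ENNReal.ofReal_le_iff_le_toReal (ne_top_of_le_ne_top ENNReal.ofReal_ne_top h2)).1 h1,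
    ENNReal.toReal_le_of_le_ofReal hb h2⟩

/-- `vol Q(P_m)^(1/(2m+1)) → √2 / π`; equivalently
`(A_{2m+1}/(2^m (2m+1)!))^(1/(2m+1)) → √2 / π`. -/
theorem tendsto_root_volume_QSet_path :
    Tendsto (fun m : ℕ =>
      (volume (QSet (pathG m))).toReal ^ (1 / (2 * (m : ℝ) + 1)))
      atTop (nhds (Real.sqrt 2 / Real.pi)) ∧
    Tendsto (fun m : ℕ =>
      ((eulerNumber (2 * m + 1) : ℝ) / (2 ^ m * Nat.factorial (2 * m + 1))) ^
        (1 / (2 * (m : ℝ) + 1)))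
      atTop (nhds (Real.sqrt 2 / Real.pi)) := by
  have hp := Real.pi_pos
  rw [← sqrt_eq]
  constructor
  · obtain ⟨L, hL, h⟩ := boundsQ
    have hb : ∀ m, 1 ≤ m → L * (2 / Real.pi ^ 2) ^ m ≤ (volume (QSet (pathG m))).toReal ∧
        (volume (QSet (pathG m))).toReal ≤ L * (2 / Real.pi ^ 2)⁻¹ * (2 / Real.pi ^ 2) ^ m := by
      intro m hm
      obtain ⟨k, rfl⟩ : ∃ k, m = k + 1 := ⟨m - 1, by omega⟩
      rw [volume_QSet_path]
      have := toReal_bounds (by positivity) (h (k + 1)).1 (h k).2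
      refine ⟨this.1, this.2.trans_eq ?_⟩
      have h0 : 2 / Real.pi ^ 2 ≠ 0 := by positivity
      rw [pow_succ _ k, mul_comm _ (2 / Real.pi ^ 2), mul_assoc, inv_mul_cancel_left₀ h0]
    exact sandwich _ L (L * (2 / Real.pi ^ 2)⁻¹) _ hL (by positivity) (by positivity)
      (fun m hm => (hb m hm).1) (fun m hm => (hb m hm).2)
  · obtain ⟨L, hL, h⟩ := boundsA
    have hb : ∀ m, 1 ≤ m → L * (2 / Real.pi ^ 2) ^ m ≤
          (eulerNumber (2 * m + 1) : ℝ) / (2 ^ m * Nat.factorial (2 * m + 1)) ∧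
        (eulerNumber (2 * m + 1) : ℝ) / (2 ^ m * Nat.factorial (2 * m + 1)) ≤
          L * (2 / Real.pi)⁻¹ * (2 / Real.pi ^ 2) ^ m := by
      intro m hm
      obtain ⟨k, hk⟩ : ∃ k, 2 * m = k + 1 := ⟨2 * m - 1, by omega⟩
      have h1 := (h (2 * m)).1
      have h2 := (h k).2
      rw [← hk] at h2
      rw [chain_alt] at h1 h2
      have := toReal_bounds (by positivity) h1 h2
      rw [ENNReal.toReal_mul, ENNReal.toReal_inv, ENNReal.toReal_natCast, ENNReal.toReal_natCast,
        ← div_eq_mul_inv] at this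
      have e1 : (2 / Real.pi ^ 2) ^ m = (2 / Real.pi) ^ (2 * m) / 2 ^ m := by
        rw [pow_mul, ← div_pow]
        congr 1
        field_simp
      have e2 : (2 / Real.pi) ^ k = (2 / Real.pi)⁻¹ * (2 / Real.pi) ^ (2 * m) := by
        have h0 : 2 / Real.pi ≠ 0 := by positivity
        rw [hk, pow_succ, mul_comm _ (2 / Real.pi), inv_mul_cancel_left₀ h0]
      rw [e2] at this
      rw [e1, mul_comm ((2 : ℝ) ^ m), ← div_div, ← mul_div_assoc, ← mul_div_assoc]
      have hpos : (0 : ℝ) ≤ 2 ^ m := by positivity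
      refine ⟨div_le_div_of_nonneg_right this.1 hpos, div_le_div_of_nonneg_right ?_ hpos⟩
      rw [mul_assoc]
      exact this.2
    exact sandwich _ L (L * (2 / Real.pi)⁻¹) _ hL (by positivity) (by positivity)
      (fun m hm => (hb m hm).1) (fun m hm => (hb m hm).2)
end
end

section
/- As m tends to infinity: (a) the (2m)-th root of the 2m-dimensional Lebesgue volume of Q(C_m) tends to sqrt(2)/pi; and (b) m times the (2m)-th root of the 2m-dimensional Lebesgue volume of the set difference Q(C_m) \ P(C_m) tends to e/sqrt(2). -/
open MeasureTheory Filter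

noncomputable section

/-- The boolean quadric polytope `P(G)` of a graph `G`: the convex hull of the 0/1
points with `y_{ij} = x_i * x_j` for every edge `(i,j)`. -/
def BQPSet {V : Type*} (G : SimpleGraph V) : Set ((V → ℝ) × (↥G.edgeSet → ℝ)) :=
  convexHull ℝ {p | (∀ i, p.1 i = 0 ∨ p.1 i = 1) ∧
    ∀ (i j : V) (h : G.Adj i j),
      p.2 ⟨s(i, j), (SimpleGraph.mem_edgeSet _).mpr h⟩ = p.1 i * p.1 j}

/-- The cycle `C_m` with `m` vertices and (for `m ≥ 3`) `m` edges. -/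
def cycleG (m : ℕ) : SimpleGraph (Fin m) :=
  SimpleGraph.fromRel (fun i j => ((i : ℕ) + 1) % m = (j : ℕ))

instance (m : ℕ) : DecidableRel (cycleG m).Adj := fun i j =>
  decidable_of_iff _ (SimpleGraph.fromRel_adj _ i j).symm

/-- peel -/
lemma lintegral_fin_cons (n : ℕ) (f : (Fin (n+1) → ℝ) → ENNReal) (hf : Measurable f) :
    ∫⁻ x, f x = ∫⁻ x' : Fin n → ℝ, ∫⁻ t : ℝ, f (Fin.cons t x') := by
  have h := (volume_preserving_piFinSuccAbove (fun _ : Fin (n+1) => ℝ) 0).symm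
  rw [← h.lintegral_comp hf]
  rw [Measure.volume_eq_prod, lintegral_prod_symm _ (by
    exact (hf.comp (MeasurableEquiv.measurable _)).aemeasurable)]
  simp [MeasurableEquiv.piFinSuccAbove_symm_apply, Fin.insertNthEquiv_zero, Fin.consEquiv]

lemma volume_simplex_fin (n : ℕ) : ∀ s : ℝ, 0 ≤ s →
    volume {w : Fin n → ℝ | (∀ i, 0 ≤ w i) ∧ ∑ i, w i < s} =
      if n = 0 then (if 0 < s then 1 else 0) else ENNReal.ofReal (s ^ n / n.factorial) := by
  induction n with
  | zero => 
    intro s hs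
    by_cases h : 0 < s <;> simp [h, volume_pi, Measure.pi_univ]
  | succ n ih => 
    intro s hs
    have hm : MeasurableSet {w : Fin (n+1) → ℝ | (∀ i, 0 ≤ w i) ∧ ∑ i, w i < s} := by
      rw [Set.ofPred_and, Set.ofPred_forall]
      refine MeasurableSet.inter (MeasurableSet.iInter fun i => measurableSet_le measurable_const (measurable_pi_apply i)) (measurableSet_lt (by fun_prop) measurable_const)
    have h := (volume_preserving_piFinSuccAbove (fun _ : Fin (n+1) => ℝ) 0).symm
    rw [← h.measure_preimage_equiv, Measure.volume_eq_prod,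
      Measure.prod_apply (by exact (MeasurableEquiv.measurable _) hm)]
    have key : ∀ t : ℝ, volume (Prod.mk t ⁻¹' ((MeasurableEquiv.piFinSuccAbove (fun _ : Fin (n+1) => ℝ) 0).symm ⁻¹' {w : Fin (n+1) → ℝ | (∀ i, 0 ≤ w i) ∧ ∑ i, w i < s})) = (Set.Ico 0 s).indicator (fun t => ENNReal.ofReal ((s-t) ^ n / n.factorial)) t := by
      intro t
      have hset : Prod.mk t ⁻¹' ((MeasurableEquiv.piFinSuccAbove (fun _ : Fin (n+1) => ℝ) 0).symm ⁻¹' {w : Fin (n+1) → ℝ | (∀ i, 0 ≤ w i) ∧ ∑ i, w i < s}) = {w : Fin n → ℝ | 0 ≤ t ∧ (∀ i, 0 ≤ w i) ∧ ∑ i, w i < s - t} := by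
        ext w
        simp only [Set.mem_preimage, Set.mem_ofPred_eq, MeasurableEquiv.piFinSuccAbove_symm_apply, Fin.insertNthEquiv_zero, Fin.consEquiv, Equiv.coe_fn_mk, Fin.forall_fin_succ, Fin.cons_zero, Fin.cons_succ, Fin.sum_univ_succ, and_assoc, lt_sub_iff_add_lt']
      rw [hset]
      by_cases ht : t ∈ Set.Ico 0 s
      · have e : {w : Fin n → ℝ | 0 ≤ t ∧ (∀ i, 0 ≤ w i) ∧ ∑ i, w i < s - t} = {w : Fin n → ℝ | (∀ i, 0 ≤ w i) ∧ ∑ i, w i < s - t} := by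
          ext w; simp [ht.1]
        rw [e, ih (s - t) (by linarith [ht.2]), Set.indicator_of_mem ht]
        rcases n with _ | n
        · simp [ht.2]
        · simp
      · rw [Set.indicator_of_notMem ht]
        convert measure_empty (μ := volume)
        ext w
        simp only [Set.mem_ofPred_eq, Set.mem_empty_iff_false, iff_false]
        rintro ⟨h1, h2, h3⟩
        exact ht ⟨h1, by linarith [Finset.sum_nonneg fun i (_ : i ∈ Finset.univ) => h2 i]⟩
    simp_rw [key]
    rw [lintegral_indicator measurableSet_Ico, restrict_Ico_eq_restrict_Ioc,
      ← ofReal_integral_eq_lintegral_ofReal]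
    · rw [← intervalIntegral.integral_of_le hs]
      rw [intervalIntegral.integral_div, intervalIntegral.integral_comp_sub_left (fun x => x ^ n)]
      simp [Nat.factorial_succ]
      congr 1
      field_simp
    · exact ((by fun_prop : Continuous fun t : ℝ => (s - t) ^ n / n.factorial).integrableOn_Icc).mono_set Set.Ioc_subset_Icc_self
    · filter_upwards [ae_restrict_mem measurableSet_Ioc] with t ht
      have := ht.2
      have : 0 ≤ s - t := by linarith
      simp only [Pi.zero_apply]
      positivity


lemma volume_simplex_prod (n : ℕ) :
    volume {p : (Fin (n+1) → ℝ) × (Fin (n+1) → ℝ) |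
      (∀ i, 0 ≤ p.1 i) ∧ (∀ i, 0 ≤ p.2 i) ∧ ∑ i, p.1 i + ∑ i, p.2 i < 1} =
      ENNReal.ofReal (1 / (2 * (n+1)).factorial) := by
  have h1 := volume_simplex_fin ((n+1)+(n+1)) 1 zero_le_one
  have e1 := (volume_measurePreserving_sumPiEquivProdPi (fun _ : Fin (n+1) ⊕ Fin (n+1) => ℝ)).symm
  have e2 := volume_measurePreserving_piCongrLeft (fun _ : Fin ((n+1)+(n+1)) => ℝ) finSumFinEquiv
  rw [← e2.measure_preimage_equiv, ← e1.measure_preimage_equiv] at h1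
  simp only [Nat.add_eq_zero_iff, one_ne_zero, and_false, if_false, one_pow] at h1
  rw [two_mul, ← h1]
  congr 1
  ext p
  have key : ∀ i, (MeasurableEquiv.piCongrLeft (fun _ : Fin ((n+1)+(n+1)) => ℝ) finSumFinEquiv)
        ((MeasurableEquiv.sumPiEquivProdPi (fun _ : Fin (n+1) ⊕ Fin (n+1) => ℝ)).symm p) (finSumFinEquiv i) = Sum.elim p.1 p.2 i := by
    intro i
    rw [MeasurableEquiv.coe_piCongrLeft, Equiv.piCongrLeft_apply_apply]
    rcases i with i | i <;> rfl
  simp only [Set.mem_preimage, Set.mem_ofPred_eq]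
  rw [← (finSumFinEquiv (m := n+1) (n := n+1)).forall_congr_right, ← (finSumFinEquiv (m := n+1) (n := n+1)).sum_comp]
  simp only [key, Fintype.sum_sum_type, Sum.elim_inl, Sum.elim_inr, Sum.forall, and_assoc]

/-- cyclic bidiagonal matrix -/
def cycMat (n : ℕ) (ε : Fin (n+1) → ℝ) : Matrix (Fin (n+1)) (Fin (n+1)) ℝ :=
  Matrix.of fun i j => (if j = i then 1 else 0) + (if j = i + 1 then ε i else 0)

lemma cycMat_mulVec (n : ℕ) (ε x : Fin (n+1) → ℝ) (i : Fin (n+1)) :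
    (cycMat n ε).mulVec x i = x i + ε i * x (i+1) := by
  simp [cycMat, Matrix.mulVec, dotProduct, add_mul, Finset.sum_add_distrib]

lemma cycMat_det (n : ℕ) (hn : 1 ≤ n) (ε : Fin (n+1) → ℝ) :
    (cycMat n ε).det = 1 + (-1) ^ n * ∏ i, ε i := by
  obtain ⟨k, rfl⟩ : ∃ k, n = k + 1 := ⟨n - 1, by omega⟩
  rw [Matrix.det_succ_column_zero, Fin.sum_univ_succ, Fin.sum_univ_castSucc]
  have hz : ∑ i : Fin k, (-1 : ℝ) ^ ((i.castSucc.succ : Fin (k+2)) : ℕ) * cycMat (k+1) ε i.castSucc.succ 0 *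
      ((cycMat (k+1) ε).submatrix (i.castSucc.succ).succAbove Fin.succ).det = 0 := by
    apply Finset.sum_eq_zero
    intro i _
    have : cycMat (k+1) ε i.castSucc.succ 0 = 0 := by
      have h1 : (0 : Fin (k+2)) ≠ i.castSucc.succ := by simp [Fin.ext_iff]
      have h2 : (0 : Fin (k+2)) ≠ i.castSucc.succ + 1 := by
        intro h
        have := congrArg Fin.val h
        rw [Fin.val_add_one_of_lt (by simp [Fin.lt_def]), Fin.val_zero] at this
        omega
      simp only [cycMat, Matrix.of_apply, if_neg h1, if_neg h2, add_zero]
    rw [this]; ring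
  rw [hz]
  have d1 : ((cycMat (k+1) ε).submatrix (Fin.succAbove 0) Fin.succ).det = 1 := by
    rw [Matrix.det_of_isUpperTriangular]
    · apply Finset.prod_eq_one
      intro i _
      have h2 : i.succ ≠ i.succ + 1 := by
        intro h
        simp at h
      simp [cycMat]
    · intro i j hij
      simp only [id] at hij
      have h1 : j.succ ≠ i.succ := by simpa using hij.ne
      have h2 : j.succ ≠ i.succ + 1 := by
        intro h
        rcases eq_or_ne i (Fin.last k) with rfl | hi
        · simp at h
        · have := congrArg Fin.val h
          rw [Fin.val_add_one_of_lt (by rw [Fin.lt_def]; have := Fin.val_lt_last hi; simp; omega)] at this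
          rw [Fin.lt_def] at hij
          simp only [Fin.val_succ] at this
          omega
      simp [cycMat, h1, h2]
  have d2 : ((cycMat (k+1) ε).submatrix (Fin.succAbove (Fin.last k).succ) Fin.succ).det = ∏ i : Fin (k+1), ε i.castSucc := by
    rw [Fin.succ_last, Fin.succAbove_last, Matrix.det_of_isLowerTriangular]
    · apply Finset.prod_congr rfl
      intro i _
      have h2 : i.succ ≠ i.castSucc := by simp [Fin.ext_iff]
      simp [cycMat, h2, Fin.coeSucc_eq_succ]
    · intro i j hij
      have hij : i < j := hij
      have h1 : j.succ ≠ i.castSucc := by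
        rw [Fin.lt_def] at hij
        simp only [ne_eq, Fin.ext_iff, Fin.val_succ, Fin.val_castSucc]
        omega
      have h2 : j.succ ≠ i.castSucc + 1 := by rw [Fin.coeSucc_eq_succ]; simpa using hij.ne'
      simp only [cycMat, Matrix.submatrix_apply, Matrix.of_apply, if_neg h1, if_neg h2, add_zero]
  rw [d1, d2, Fin.prod_univ_castSucc (n := k+1)]
  have e1 : cycMat (k+1) ε 0 0 = 1 := by simp [cycMat]
  have e2 : cycMat (k+1) ε (Fin.last k).succ 0 = ε (Fin.last (k+1)) := by
    simp [cycMat, Fin.ext_iff]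
  rw [e1, e2]
  simp only [Fin.val_zero, Fin.val_succ, Fin.val_last]
  ring

lemma volume_preimage_affine {n : ℕ} (M : Matrix (Fin n) (Fin n) ℝ) (hM : M.det ≠ 0) (c : Fin n → ℝ) (A : Set (Fin n → ℝ)) :
    volume {x | c - M.mulVec x ∈ A} = ENNReal.ofReal |M.det⁻¹| * volume A := by
  have h := Measure.addHaar_preimage_linearMap (volume : Measure (Fin n → ℝ)) (f := Matrix.toLin' M) (by simpa using hM)
    {y | c - y ∈ A}
  rw [LinearMap.det_toLin'] at h
  have e : volume {y | c - y ∈ A} = volume A :=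
    (Measure.measurePreserving_sub_left (volume : Measure (Fin n → ℝ)) c).measure_preimage_equiv (f := MeasurableEquiv.subLeft c) A
  rw [e] at h
  rw [← h]
  rfl


/-- first slack variable of an edge -/
def slk1 {n : ℕ} (F : Fin (n+1) → Bool) (p : (Fin (n+1) → ℝ) × (Fin (n+1) → ℝ)) (i : Fin (n+1)) : ℝ :=
  if F i then p.2 i else p.1 i - p.2 i

/-- second slack variable of an edge -/
def slk2 {n : ℕ} (F : Fin (n+1) → Bool) (p : (Fin (n+1) → ℝ) × (Fin (n+1) → ℝ)) (i : Fin (n+1)) : ℝ :=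
  if F i then 1 - p.1 i - p.1 (i+1) + p.2 i else p.1 (i+1) - p.2 i

/-- corner region -/
def Reg {n : ℕ} (F : Fin (n+1) → Bool) : Set ((Fin (n+1) → ℝ) × (Fin (n+1) → ℝ)) :=
  {p | (∀ i, 0 ≤ slk1 F p i) ∧ (∀ i, 0 ≤ slk2 F p i) ∧ ∑ i, slk1 F p i + ∑ i, slk2 F p i < 1}

/-- sign of an edge -/
def sgnE {n : ℕ} (F : Fin (n+1) → Bool) (i : Fin (n+1)) : ℝ := if F i then 1 else -1

/-- odd sets of edges, via the sign product -/
def OddF {n : ℕ} (F : Fin (n+1) → Bool) : Prop := ∏ i, (if F i then (-1 : ℝ) else 1) = -1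

lemma det_odd {n : ℕ} (hn : 1 ≤ n) (F : Fin (n+1) → Bool) (hF : OddF F) :
    (cycMat n (sgnE F)).det = 2 := by
  rw [cycMat_det n hn]
  have : ∏ i, sgnE F i = (-1) ^ n := by
    have h : ∀ i, sgnE F i = (-1) * (if F i then (-1 : ℝ) else 1) := by
      intro i; unfold sgnE; split_ifs <;> norm_num
    simp_rw [h]
    rw [Finset.prod_mul_distrib, hF]
    simp [pow_succ]
  rw [this, ← mul_pow]; norm_num

lemma measurable_slk1 {n : ℕ} (F : Fin (n+1) → Bool) (i) : Measurable (fun p => slk1 F p i) := by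
  unfold slk1; split_ifs <;> fun_prop
lemma measurable_slk2 {n : ℕ} (F : Fin (n+1) → Bool) (i) : Measurable (fun p => slk2 F p i) := by
  unfold slk2; split_ifs <;> fun_prop

lemma measurableSet_simplex (n : ℕ) : MeasurableSet {p : (Fin (n+1) → ℝ) × (Fin (n+1) → ℝ) |
      (∀ i, 0 ≤ p.1 i) ∧ (∀ i, 0 ≤ p.2 i) ∧ ∑ i, p.1 i + ∑ i, p.2 i < 1} := by
  simp only [Set.ofPred_and, Set.ofPred_forall]
  refine MeasurableSet.inter (MeasurableSet.iInter fun i => measurableSet_le measurable_const (by fun_prop))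
    (MeasurableSet.inter (MeasurableSet.iInter fun i => measurableSet_le measurable_const (by fun_prop))
    (measurableSet_lt (by fun_prop) measurable_const))

lemma Reg_eq {n : ℕ} (F : Fin (n+1) → Bool) : Reg F = (fun p => (slk1 F p, slk2 F p)) ⁻¹'
    {p : (Fin (n+1) → ℝ) × (Fin (n+1) → ℝ) |
      (∀ i, 0 ≤ p.1 i) ∧ (∀ i, 0 ≤ p.2 i) ∧ ∑ i, p.1 i + ∑ i, p.2 i < 1} := by
  ext p; simp [Reg]

lemma measurableSet_Reg {n : ℕ} (F : Fin (n+1) → Bool) : MeasurableSet (Reg F) := by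
  rw [Reg_eq]
  refine (Measurable.prodMk (measurable_pi_lambda _ fun i => measurable_slk1 F i)
    (measurable_pi_lambda _ fun i => measurable_slk2 F i)) (measurableSet_simplex n)

lemma mp_slk1 {n : ℕ} (F : Fin (n+1) → Bool) :
    MeasurePreserving (fun p : (Fin (n+1) → ℝ) × (Fin (n+1) → ℝ) => (p.1, slk1 F p)) := by
  have := MeasurePreserving.skew_product (μa := (volume : Measure (Fin (n+1) → ℝ))) (μb := volume) (f := id)
    (μc := (volume : Measure (Fin (n+1) → ℝ))) (μd := (volume : Measure (Fin (n+1) → ℝ)))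
    (g := fun x y => slk1 F (x, y)) (MeasurePreserving.id _)
    (measurable_pi_lambda _ fun i => measurable_slk1 F i) (by
      refine Eventually.of_forall fun x => ?_
      have := volume_preserving_pi (ι := Fin (n+1)) (α' := fun _ => ℝ) (β' := fun _ => ℝ) (f := fun i (t : ℝ) => if F i then t else x i - t) (by
        intro i
        by_cases h : F i
        · simp only [h, if_true]; exact MeasurePreserving.id _
        · simp only [h, if_false]; exact Measure.measurePreserving_sub_left _ _)
      exact this.map_eq)
  exact this

lemma volume_Reg {n : ℕ} (hn : 1 ≤ n) (F : Fin (n+1) → Bool) (hF : OddF F) :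
    volume (Reg F) = ENNReal.ofReal (1/2) * ENNReal.ofReal (1 / (2 * (n+1)).factorial) := by
  let S := {p : (Fin (n+1) → ℝ) × (Fin (n+1) → ℝ) |
      (∀ i, 0 ≤ p.1 i) ∧ (∀ i, 0 ≤ p.2 i) ∧ ∑ i, p.1 i + ∑ i, p.2 i < 1}
  let c : Fin (n+1) → ℝ := fun i => if F i then 1 else 0
  let ψ : (Fin (n+1) → ℝ) × (Fin (n+1) → ℝ) → (Fin (n+1) → ℝ) × (Fin (n+1) → ℝ) :=
    fun q => (q.2, (q.2 + c) - (cycMat n (sgnE F)).mulVec q.1)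
  have hψ : Measurable ψ := by
    refine Measurable.prodMk measurable_snd (measurable_pi_lambda _ fun i => ?_)
    simp only [Pi.sub_apply, Pi.add_apply, cycMat_mulVec]
    fun_prop
  have hS : MeasurableSet S := measurableSet_simplex n
  have h1 : Reg F = (fun p : (Fin (n+1) → ℝ) × (Fin (n+1) → ℝ) => (p.1, slk1 F p)) ⁻¹' (ψ ⁻¹' S) := by
    rw [Reg_eq, ← Set.preimage_comp]
    congr 1
    funext p
    simp only [Function.comp, ψ]
    congr 1
    funext i
    simp only [Pi.sub_apply, Pi.add_apply, cycMat_mulVec, slk1, slk2, sgnE, c]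
    split_ifs <;> ring
  rw [h1, (mp_slk1 F).measure_preimage (hψ hS).nullMeasurableSet, Measure.volume_eq_prod,
    Measure.prod_apply_symm (hψ hS)]
  have h2 : ∀ t : Fin (n+1) → ℝ, volume ((fun x => (x, t)) ⁻¹' (ψ ⁻¹' S)) =
      ENNReal.ofReal (1/2) * volume (Prod.mk t ⁻¹' S) := by
    intro t
    have := volume_preimage_affine (cycMat n (sgnE F)) (by rw [det_odd hn F hF]; norm_num) (t + c) (Prod.mk t ⁻¹' S)
    rw [det_odd hn F hF] at this
    rw [show ENNReal.ofReal (1/2) = ENNReal.ofReal |(2:ℝ)⁻¹| by norm_num, ← this]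
    rfl
  simp_rw [h2]
  rw [lintegral_const_mul _ (measurable_measure_prodMk_left hS), ← Measure.prod_apply hS, ← Measure.volume_eq_prod,
    volume_simplex_prod]


/-- cyclic relaxation in coordinates -/
def Qc (n : ℕ) : Set ((Fin (n+1) → ℝ) × (Fin (n+1) → ℝ)) :=
  {p | ∀ i, 0 ≤ p.2 i ∧ p.2 i ≤ p.1 i ∧ p.2 i ≤ p.1 (i+1) ∧ p.1 i + p.1 (i+1) ≤ 1 + p.2 i}

/-- vertices of the cyclic boolean quadric polytope in coordinates -/
def Vc (n : ℕ) : Set ((Fin (n+1) → ℝ) × (Fin (n+1) → ℝ)) :=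
  {p | (∀ i, p.1 i = 0 ∨ p.1 i = 1) ∧ ∀ i, p.2 i = p.1 i * p.1 (i+1)}

section walkSection
open scoped Fin.NatCast Fin.CommRing

lemma sum_walk {n : ℕ} (g : Fin (n+1) → ℝ) (i : Fin (n+1)) :
    ∑ j ∈ Finset.range n, g (i + 1 + (j : Fin (n+1))) + g i = ∑ j, g j := by
  have h1 : ∑ j, g j = ∑ j, g (i + 1 + j) := (Equiv.sum_comp (Equiv.addLeft (i+1)) g).symm
  have h2 : ∑ j : Fin (n+1), g (i + 1 + j) = ∑ j : Fin (n+1), g (i + 1 + ((j : ℕ) : Fin (n+1))) := by simp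
  rw [h1, h2, Fin.sum_univ_eq_sum_range (fun j : ℕ => g (i + 1 + (j : Fin (n+1)))) (n+1), Finset.sum_range_succ]
  congr 2
  rw [add_assoc, Fin.natCast_eq_last, add_comm 1, Fin.last_add_one, add_zero]

lemma prod_walk {n : ℕ} (g : Fin (n+1) → ℝ) (i : Fin (n+1)) :
    (∏ j ∈ Finset.range n, g (i + 1 + (j : Fin (n+1)))) * g i = ∏ j, g j := by
  have h1 : ∏ j, g j = ∏ j, g (i + 1 + j) := (Equiv.prod_comp (Equiv.addLeft (i+1)) g).symm
  have h2 : ∏ j : Fin (n+1), g (i + 1 + j) = ∏ j : Fin (n+1), g (i + 1 + ((j : ℕ) : Fin (n+1))) := by simp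
  rw [h1, h2, Fin.prod_univ_eq_prod_range (fun j : ℕ => g (i + 1 + (j : Fin (n+1)))) (n+1), Finset.prod_range_succ]
  congr 2
  rw [add_assoc, Fin.natCast_eq_last, add_comm 1, Fin.last_add_one, add_zero]

/-- flip sign of an edge -/
def eta {n : ℕ} (F : Fin (n+1) → Bool) (i : Fin (n+1)) : ℝ := if F i then -1 else 1

lemma abs_eta {n : ℕ} (F : Fin (n+1) → Bool) (i : Fin (n+1)) : |eta F i| = 1 := by
  unfold eta; split_ifs <;> simp

lemma walk {n : ℕ} (F : Fin (n+1) → Bool) (hF : OddF F) (u w : Fin (n+1) → ℝ)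
    (h : ∀ i, |u (i+1) - eta F i * u i| ≤ w i) (i : Fin (n+1)) :
    |u i + eta F i * u (i+1)| ≤ ∑ j, w j - w i := by
  have key : ∀ k : ℕ, |u (i + 1 + (k : Fin (n+1))) - (∏ j ∈ Finset.range k, eta F (i + 1 + (j : Fin (n+1)))) * u (i+1)| ≤
      ∑ j ∈ Finset.range k, w (i + 1 + (j : Fin (n+1))) := by
    intro k
    induction k with
    | zero => simp
    | succ k ih =>
      rw [Finset.prod_range_succ, Finset.sum_range_succ]
      have h1 := h (i + 1 + (k : Fin (n+1)))
      set P := ∏ j ∈ Finset.range k, eta F (i + 1 + (j : Fin (n+1)))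
      set a := i + 1 + (k : Fin (n+1)) with ha
      have : i + 1 + ((k + 1 : ℕ) : Fin (n+1)) = a + 1 := by rw [ha]; push_cast; ring
      rw [this]
      calc _ = |(u (a + 1) - eta F a * u a) + eta F a * (u a - P * u (i+1))| := by congr 1; ring
        _ ≤ |u (a + 1) - eta F a * u a| + |eta F a * (u a - P * u (i+1))| := abs_add_le _ _
        _ = |u (a + 1) - eta F a * u a| + |u a - P * u (i+1)| := by rw [abs_mul, abs_eta, one_mul]
        _ ≤ _ := by linarith
  have h2 := key n
  have h3 := sum_walk w i
  have h4 := prod_walk (eta F) i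
  have h5 : ∏ j, eta F j = -1 := hF
  have h6 : i + 1 + (n : Fin (n+1)) = i := by
    rw [add_assoc, Fin.natCast_eq_last, add_comm 1, Fin.last_add_one, add_zero]
  rw [h6] at h2
  rw [h5] at h4
  have h7 : ∏ j ∈ Finset.range n, eta F (i + 1 + (j : Fin (n+1))) = - eta F i := by
    have : eta F i * eta F i = 1 := by unfold eta; split_ifs <;> norm_num
    linear_combination (eta F i) * h4 - (∏ j ∈ Finset.range n, eta F (i + 1 + (j : Fin (n+1)))) * this
  rw [h7] at h2
  rw [show u i + eta F i * u (i+1) = u i - -eta F i * u (i+1) by ring]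
  linarith

end walkSection

/-- slack sum of an edge -/
def wE {n : ℕ} (F : Fin (n+1) → Bool) (p : (Fin (n+1) → ℝ) × (Fin (n+1) → ℝ)) (i : Fin (n+1)) : ℝ :=
  slk1 F p i + slk2 F p i

lemma step_le {n : ℕ} (F : Fin (n+1) → Bool) (p : (Fin (n+1) → ℝ) × (Fin (n+1) → ℝ)) (i : Fin (n+1))
    (h1 : 0 ≤ slk1 F p i) (h2 : 0 ≤ slk2 F p i) :
    |(p.1 (i+1) - 1/2) - eta F i * (p.1 i - 1/2)| ≤ wE F p i := by
  unfold wE eta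
  unfold slk1 at *
  unfold slk2 at *
  split_ifs at * <;> rw [abs_le] <;> constructor <;> linarith

lemma Reg_subset_Qc {n : ℕ} (F : Fin (n+1) → Bool) (hF : OddF F) : Reg F ⊆ Qc n := by
  rintro p ⟨h1, h2, h3⟩ i
  have hw := walk F hF (fun i => p.1 i - 1/2) (wE F p) (fun i => step_le F p i (h1 i) (h2 i)) i
  rw [← Finset.sum_add_distrib] at h3
  have h3 : ∑ j, wE F p j < 1 := h3
  have hw : |(p.1 i - 1/2) + eta F i * (p.1 (i+1) - 1/2)| ≤ 1 - wE F p i := by linarith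
  rw [abs_le] at hw
  have h1 := h1 i
  have h2 := h2 i
  unfold wE eta at hw
  unfold slk1 at *
  unfold slk2 at *
  split_ifs at * <;> refine ⟨?_, ?_, ?_, ?_⟩ <;> linarith

lemma slk_nonneg_of_Qc {n : ℕ} (F : Fin (n+1) → Bool) (p) (hp : p ∈ Qc n) (i) :
    0 ≤ slk1 F p i ∧ 0 ≤ slk2 F p i := by
  obtain ⟨h1, h2, h3, h4⟩ := hp i
  unfold slk1 slk2
  split_ifs <;> constructor <;> linarith

lemma Vc_subset_Qc (n : ℕ) : Vc n ⊆ Qc n := by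
  rintro p ⟨h1, h2⟩ i
  rw [h2 i]
  rcases h1 i with h | h <;> rcases h1 (i+1) with h' | h' <;> rw [h, h'] <;> norm_num

lemma Vc_valid {n : ℕ} (F : Fin (n+1) → Bool) (hF : OddF F) (p) (hp : p ∈ Vc n) :
    1 ≤ ∑ i, slk1 F p i + ∑ i, slk2 F p i := by
  have hs := slk_nonneg_of_Qc F p (Vc_subset_Qc n hp)
  have hw := walk F hF (fun i => p.1 i - 1/2) (wE F p) (fun i => step_le F p i (hs i).1 (hs i).2) 0
  have hz := step_le F p 0 (hs 0).1 (hs 0).2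
  rw [← Finset.sum_add_distrib]
  change 1 ≤ ∑ j, wE F p j
  rw [abs_le] at hw hz
  simp only [eta] at hw hz
  rcases hp.1 0 with h | h <;> rcases hp.1 (0+1) with h' | h' <;> rw [h, h'] at hw hz <;>
    split_ifs at hw hz <;> linarith

lemma hull_valid {n : ℕ} (F : Fin (n+1) → Bool) (hF : OddF F) (p) (hp : p ∈ convexHull ℝ (Vc n)) :
    1 ≤ ∑ i, slk1 F p i + ∑ i, slk2 F p i := by
  have hc : Convex ℝ {p : (Fin (n+1) → ℝ) × (Fin (n+1) → ℝ) | 1 ≤ ∑ i, slk1 F p i + ∑ i, slk2 F p i} := by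
    intro p hp q hq a b ha hb hab
    simp only [Set.mem_ofPred_eq] at *
    have e : ∑ i, slk1 F (a • p + b • q) i + ∑ i, slk2 F (a • p + b • q) i =
      a * (∑ i, slk1 F p i + ∑ i, slk2 F p i) + b * (∑ i, slk1 F q i + ∑ i, slk2 F q i) := by
      simp only [← Finset.sum_add_distrib, Finset.mul_sum]
      refine Finset.sum_congr rfl fun i _ => ?_
      obtain rfl : b = 1 - a := by linarith
      simp only [slk1, slk2, Prod.fst_add, Prod.snd_add, Prod.smul_fst, Prod.smul_snd, Pi.add_apply, Pi.smul_apply, smul_eq_mul]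
      split_ifs <;> ring
    rw [e]
    nlinarith
  exact convexHull_min (fun p hp => Vc_valid F hF p hp) hc hp

lemma Reg_disjoint {n : ℕ} (F G : Fin (n+1) → Bool) (hF : OddF F) (hG : OddF G) (hne : F ≠ G) :
    Disjoint (Reg F) (Reg G) := by
  rw [Set.disjoint_left]
  intro p hp hq
  have hQ := Reg_subset_Qc F hF hp
  have hp3 := hp.2.2
  have hq3 := hq.2.2
  rw [← Finset.sum_add_distrib] at hp3 hq3
  change ∑ j, wE F p j < 1 at hp3
  change ∑ j, wE G p j < 1 at hq3
  obtain ⟨i, hi⟩ := Function.ne_iff.mp hne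
  have hex : ∃ j, j ≠ i ∧ F j ≠ G j := by
    by_contra! hcon
    have e1 : ∏ k ∈ Finset.univ.erase i, (if F k then (-1 : ℝ) else 1) = ∏ k ∈ Finset.univ.erase i, (if G k then (-1 : ℝ) else 1) :=
      Finset.prod_congr rfl fun k hk => by rw [hcon k (Finset.ne_of_mem_erase hk)]
    have h1 : ∏ k, (if F k then (-1 : ℝ) else 1) = -1 := hF
    have h2 : ∏ k, (if G k then (-1 : ℝ) else 1) = -1 := hG
    rw [← Finset.mul_prod_erase _ _ (Finset.mem_univ i)] at h1 h2
    rw [e1] at h1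
    cases hFi : F i <;> cases hGi : G i <;> simp [hFi, hGi] at h1 h2 hi <;> linarith
  obtain ⟨j, hji, hj⟩ := hex
  have hd : ∀ k, F k ≠ G k → wE F p k + wE G p k = 1 := by
    intro k hk
    unfold wE slk1 slk2
    cases hFi : F k <;> cases hGi : G k <;> simp [hFi, hGi] at hk ⊢ <;> ring
  have h0 : ∀ k, 0 ≤ wE F p k + wE G p k := by
    intro k
    have a := slk_nonneg_of_Qc F p hQ k
    have b := slk_nonneg_of_Qc G p hQ k
    unfold wE
    linarith
  have hle := Finset.sum_le_sum_of_subset_of_nonneg (Finset.subset_univ ({j, i} : Finset (Fin (n+1))))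
    (f := fun k => wE F p k + wE G p k) (fun k _ _ => h0 k)
  rw [Finset.sum_pair hji, Finset.sum_add_distrib] at hle
  rw [hd i hi, hd j hj] at hle
  linarith

lemma card_odd (n : ℕ) [DecidablePred (OddF (n := n))] : (Finset.univ.filter (OddF (n := n))).card = 2 ^ n := by
  classical
  have hcases : ∀ F : Fin (n+1) → Bool, OddF F ∨ ∏ i, (if F i then (-1 : ℝ) else 1) = 1 := by
    intro F
    have : (∏ i, (if F i then (-1 : ℝ) else 1)) ^ 2 = 1 := by
      rw [← Finset.prod_pow]
      exact Finset.prod_eq_one fun i _ => by split_ifs <;> norm_num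
    rcases (by simpa using this) with h | h
    · exact Or.inr h
    · exact Or.inl h
  let tog : (Fin (n+1) → Bool) → (Fin (n+1) → Bool) := fun F => Function.update F 0 (!F 0)
  have htog : ∀ F, tog (tog F) = F := by intro F; simp [tog]
  have hsign : ∀ F, ∏ i, (if tog F i then (-1 : ℝ) else 1) = - ∏ i, (if F i then (-1 : ℝ) else 1) := by
    intro F
    rw [Fin.prod_univ_succ, Fin.prod_univ_succ]
    cases h : F 0 <;> simp [tog, h]
  have hinv : (Finset.univ.filter (OddF (n := n))).card = (Finset.univ.filter (fun F => ¬ OddF (n := n) F)).card := by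
    have key : ∀ F, OddF (tog F) ↔ ¬ OddF F := by
      intro F
      have h1 := hsign F
      unfold OddF
      rw [h1]
      rcases hcases F with h | h
      · have : ∏ i, (if F i then (-1 : ℝ) else 1) = -1 := h
        rw [this]; norm_num
      · rw [h]; norm_num
    refine Finset.card_bij' (fun F _ => tog F) (fun F _ => tog F) ?_ ?_ ?_ ?_
    · intro F hF
      simp only [Finset.mem_filter, Finset.mem_univ, true_and] at hF ⊢
      rw [key]; simpa using hF
    · intro F hF
      simp only [Finset.mem_filter, Finset.mem_univ, true_and] at hF ⊢
      rw [key]; exact hF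
    · intro F _; exact htog F
    · intro F _; exact htog F
  have htot := Finset.card_filter_add_card_filter_not (s := (Finset.univ : Finset (Fin (n+1) → Bool))) (OddF (n := n))
  rw [← hinv] at htot
  simp [pow_succ] at htot
  omega

lemma exists_cond (g q : ℝ) (h0 : 0 ≤ g) (h1 : g ≤ q) : ∃ c : ℝ, 0 ≤ c ∧ c ≤ 1 ∧ g = c * q := by
  rcases eq_or_ne q 0 with h | h
  · exact ⟨0, le_rfl, zero_le_one, by rw [h]; linarith⟩
  · have : 0 < q := lt_of_le_of_ne (h0.trans h1) h.symm
    exact ⟨g / q, by positivity, (div_le_one this).2 h1, by field_simp⟩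

lemma exists_between_five (a1 a2 a3 a4 a5 b1 b2 b3 b4 b5 : ℝ)
    (h : ∀ a ∈ [a1, a2, a3, a4, a5], ∀ b ∈ [b1, b2, b3, b4, b5], a ≤ b) :
    ∃ u, a1 ≤ u ∧ a2 ≤ u ∧ a3 ≤ u ∧ a4 ≤ u ∧ a5 ≤ u ∧ u ≤ b1 ∧ u ≤ b2 ∧ u ≤ b3 ∧ u ≤ b4 ∧ u ≤ b5 := by
  simp only [List.mem_cons, List.not_mem_nil, or_false, forall_eq_or_imp, forall_eq] at h
  refine ⟨max a1 (max a2 (max a3 (max a4 a5))), by simp, by simp, by simp, by simp, by simp, ?_, ?_, ?_, ?_, ?_⟩ <;>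
  simp only [max_le_iff] <;> tauto

/-- triangle lemma -/
lemma triangle_cond (x0 xk x' z yk z' : ℝ)
    (a1 : 0 ≤ z) (a2 : z ≤ x0) (a3 : z ≤ xk) (a4 : x0 + xk ≤ 1 + z)
    (b1 : 0 ≤ yk) (b2 : yk ≤ xk) (b3 : yk ≤ x') (b4 : xk + x' ≤ 1 + yk)
    (c1 : 0 ≤ z') (c2 : z' ≤ x0) (c3 : z' ≤ x') (c4 : x0 + x' ≤ 1 + z')
    (t1 : x0 + x' - 2 * z' ≤ (x0 + xk - 2 * z) + (xk + x' - 2 * yk))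
    (t2 : x0 + xk - 2 * z ≤ (x0 + x' - 2 * z') + (xk + x' - 2 * yk))
    (t3 : xk + x' - 2 * yk ≤ (x0 + x' - 2 * z') + (x0 + xk - 2 * z))
    (t4 : (x0 + x' - 2 * z') + (x0 + xk - 2 * z) + (xk + x' - 2 * yk) ≤ 2) :
    ∃ k11 k10 k01 k00 : ℝ, (0 ≤ k11 ∧ k11 ≤ 1) ∧ (0 ≤ k10 ∧ k10 ≤ 1) ∧ (0 ≤ k01 ∧ k01 ≤ 1) ∧
      (0 ≤ k00 ∧ k00 ≤ 1) ∧
      x' = k11 * z + k10 * (x0 - z) + k01 * (xk - z) + k00 * (1 - x0 - xk + z) ∧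
      yk = k11 * z + k01 * (xk - z) ∧ z' = k11 * z + k10 * (x0 - z) := by
  obtain ⟨u, l1, l2, l3, l4, -, u1, u2, u3, u4, -⟩ :=
    exists_between_five 0 (yk - (xk - z)) (z' - (x0 - z)) (yk + z' - x') 0
      z yk z' (1 - x0 - xk + z - x' + yk + z') z (by
        simp only [List.mem_cons, List.not_mem_nil, or_false, forall_eq_or_imp, forall_eq]
        refine ⟨⟨?_, ?_, ?_, ?_, ?_⟩, ⟨?_, ?_, ?_, ?_, ?_⟩, ⟨?_, ?_, ?_, ?_, ?_⟩, ⟨?_, ?_, ?_, ?_, ?_⟩, ⟨?_, ?_, ?_, ?_, ?_⟩⟩ <;> linarith)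
  obtain ⟨k11, p1, p2, p3⟩ := exists_cond u z l1 u1
  obtain ⟨k10, q1, q2, q3⟩ := exists_cond (z' - u) (x0 - z) (by linarith) (by linarith)
  obtain ⟨k01, r1, r2, r3⟩ := exists_cond (yk - u) (xk - z) (by linarith) (by linarith)
  obtain ⟨k00, s1, s2, s3⟩ := exists_cond (x' - yk - z' + u) (1 - x0 - xk + z) (by linarith) (by linarith)
  exact ⟨k11, k10, k01, k00, ⟨p1, p2⟩, ⟨q1, q2⟩, ⟨r1, r2⟩, ⟨s1, s2⟩, by linarith, by linarith, by linarith⟩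

/-- integral points of path with chord -/
def SP (k : ℕ) : Set ((ℕ → ℝ) × (ℕ → ℝ) × ℝ) :=
  {p | (∀ i ≤ k, p.1 i = 0 ∨ p.1 i = 1) ∧ (∀ i < k, p.2.1 i = p.1 i * p.1 (i+1)) ∧ p.2.2 = p.1 0 * p.1 k}

lemma SP_ext (k : ℕ) (p) (hp : p ∈ SP k) (t : ℝ) (ht : t = 0 ∨ t = 1) :
    (Function.update p.1 (k+1) t, Function.update p.2.1 k (p.1 k * t), p.1 0 * t) ∈ SP (k+1) := by
  obtain ⟨h1, h2, h3⟩ := hp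
  refine ⟨?_, ?_, ?_⟩
  · intro i hi
    rcases eq_or_ne i (k+1) with rfl | h
    · simpa using ht
    · simp only [Function.update_of_ne h]
      exact h1 i (by omega)
  · intro i hi
    have hne : i ≠ k + 1 := by omega
    rcases eq_or_ne i k with rfl | h
    · simp
    · have h' : i + 1 ≠ k + 1 := by omega
      simp only [Function.update_of_ne h, Function.update_of_ne h', Function.update_of_ne hne]
      exact h2 i (by omega)
  · simp

lemma glue (k : ℕ) (k11 k10 k01 k00 : ℝ) (h11 : 0 ≤ k11 ∧ k11 ≤ 1) (h10 : 0 ≤ k10 ∧ k10 ≤ 1)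
    (h01 : 0 ≤ k01 ∧ k01 ≤ 1) (h00 : 0 ≤ k00 ∧ k00 ≤ 1) (p) (hp : p ∈ convexHull ℝ (SP k)) :
    ((Function.update p.1 (k+1) (k11 * p.2.2 + k10 * (p.1 0 - p.2.2) + k01 * (p.1 k - p.2.2) + k00 * (1 - p.1 0 - p.1 k + p.2.2)),
      Function.update p.2.1 k (k11 * p.2.2 + k01 * (p.1 k - p.2.2)),
      k11 * p.2.2 + k10 * (p.1 0 - p.2.2)) : (ℕ → ℝ) × (ℕ → ℝ) × ℝ) ∈ convexHull ℝ (SP (k+1)) := by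
  set Φ : (ℕ → ℝ) × (ℕ → ℝ) × ℝ → (ℕ → ℝ) × (ℕ → ℝ) × ℝ := fun p =>
    (Function.update p.1 (k+1) (k11 * p.2.2 + k10 * (p.1 0 - p.2.2) + k01 * (p.1 k - p.2.2) + k00 * (1 - p.1 0 - p.1 k + p.2.2)),
      Function.update p.2.1 k (k11 * p.2.2 + k01 * (p.1 k - p.2.2)),
      k11 * p.2.2 + k10 * (p.1 0 - p.2.2)) with hΦ
  change Φ p ∈ _
  have hc : Convex ℝ {p | Φ p ∈ convexHull ℝ (SP (k+1))} := by
    intro p hp q hq a b ha hb hab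
    have e : Φ (a • p + b • q) = a • Φ p + b • Φ q := by
      obtain rfl : b = 1 - a := by linarith
      simp only [hΦ]
      refine Prod.ext ?_ (Prod.ext ?_ ?_)
      · funext i
        rcases eq_or_ne i (k+1) with rfl | h
        · simp; ring
        · simp [h]
      · funext i
        rcases eq_or_ne i k with rfl | h
        · simp; ring
        · simp [h]
      · simp; ring
    simp only [Set.mem_ofPred_eq] at *
    rw [e]
    exact convex_convexHull ℝ _ hp hq ha hb hab
  refine convexHull_min (t := {p | Φ p ∈ convexHull ℝ (SP (k+1))}) ?_ hc hp
  intro v hv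
  have w1 := subset_convexHull ℝ _ (SP_ext k v hv 1 (Or.inr rfl))
  have w0 := subset_convexHull ℝ _ (SP_ext k v hv 0 (Or.inl rfl))
  have key : ∃ c : ℝ, 0 ≤ c ∧ c ≤ 1 ∧ (k11 * v.2.2 + k10 * (v.1 0 - v.2.2) + k01 * (v.1 k - v.2.2) + k00 * (1 - v.1 0 - v.1 k + v.2.2)) = c ∧
      (k11 * v.2.2 + k01 * (v.1 k - v.2.2)) = c * v.1 k ∧ k11 * v.2.2 + k10 * (v.1 0 - v.2.2) = c * v.1 0 := by
    rw [hv.2.2]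
    rcases hv.1 0 (Nat.zero_le _) with h | h <;> rcases hv.1 k le_rfl with h' | h' <;> rw [h, h']
    · exact ⟨k00, h00.1, h00.2, by ring, by ring, by ring⟩
    · exact ⟨k01, h01.1, h01.2, by ring, by ring, by ring⟩
    · exact ⟨k10, h10.1, h10.2, by ring, by ring, by ring⟩
    · exact ⟨k11, h11.1, h11.2, by ring, by ring, by ring⟩
  obtain ⟨c, c0, c1, e1, e2, e3⟩ := key
  have e : Φ v = c • (Function.update v.1 (k+1) (1:ℝ), Function.update v.2.1 k (v.1 k * 1), v.1 0 * 1) +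
      (1 - c) • (Function.update v.1 (k+1) (0:ℝ), Function.update v.2.1 k (v.1 k * 0), v.1 0 * 0) := by
    simp only [hΦ]
    rw [e1, e2, e3]
    refine Prod.ext ?_ (Prod.ext ?_ ?_)
    · funext i
      rcases eq_or_ne i (k+1) with rfl | h
      · simp
      · simp [h]; ring
    · funext i
      rcases eq_or_ne i k with rfl | h
      · simp
      · simp [h]; ring
    · simp
  simp only [Set.mem_ofPred_eq]
  rw [e]
  exact convex_convexHull ℝ _ w1 w0 c0 (by linarith) (by ring)

/-- disagreement of an edge of the path -/
def dE (x y : ℕ → ℝ) (i : ℕ) : ℝ := x i + x (i+1) - 2 * y i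

/-- the least even and odd path weights -/
def ab (x y : ℕ → ℝ) : ℕ → ℝ × ℝ
  | 0 => (0, 1)
  | k+1 => (min ((ab x y k).1 + dE x y k) ((ab x y k).2 + 1 - dE x y k),
            min ((ab x y k).1 + 1 - dE x y k) ((ab x y k).2 + dE x y k))

/-- local condition at edge i -/
def LocC (x y : ℕ → ℝ) (i : ℕ) : Prop :=
  0 ≤ y i ∧ y i ≤ x i ∧ y i ≤ x (i+1) ∧ x i + x (i+1) ≤ 1 + y i

lemma ab_inv (x y : ℕ → ℝ) (k : ℕ) (h0 : 0 ≤ x 0 ∧ x 0 ≤ 1) (h : ∀ i < k, LocC x y i) :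
    x 0 - x k ≤ (ab x y k).1 ∧ x k - x 0 ≤ (ab x y k).1 ∧ x 0 + x k - 1 ≤ (ab x y k).2 ∧ 1 - x 0 - x k ≤ (ab x y k).2
     ∧ 1 ≤ (ab x y k).1 + (ab x y k).2 ∧ 0 ≤ x k ∧ x k ≤ 1 := by
  induction k with
  | zero => simp only [ab]; refine ⟨?_, ?_, ?_, ?_, ?_, ?_, ?_⟩ <;> linarith
  | succ k ih =>
    obtain ⟨i1, i2, i3, i4, i5, i6, i7⟩ := ih (fun i hi => h i (by omega))
    obtain ⟨l1, l2, l3, l4⟩ := h k (by omega)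
    simp only [ab, dE, le_min_iff]
    refine ⟨⟨?_, ?_⟩, ⟨?_, ?_⟩, ⟨?_, ?_⟩, ⟨?_, ?_⟩, ?_, ?_, ?_⟩
    all_goals try linarith
    rcases min_choice ((ab x y k).1 + (x k + x (k + 1) - 2 * y k)) ((ab x y k).2 + 1 - (x k + x (k + 1) - 2 * y k)) with h | h <;>
    rcases min_choice ((ab x y k).1 + 1 - (x k + x (k + 1) - 2 * y k)) ((ab x y k).2 + (x k + x (k + 1) - 2 * y k)) with h' | h' <;>
    rw [h, h'] <;> linarith

lemma path_hull (x y : ℕ → ℝ) (k : ℕ) (h0 : 0 ≤ x 0 ∧ x 0 ≤ 1) (h : ∀ i < k, LocC x y i) (z : ℝ)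
    (c1 : 0 ≤ z) (c2 : z ≤ x 0) (c3 : z ≤ x k) (c4 : x 0 + x k ≤ 1 + z)
    (hu : x 0 + x k - 2 * z ≤ (ab x y k).1) (hl : 1 - (ab x y k).2 ≤ x 0 + x k - 2 * z) :
    (x, y, z) ∈ convexHull ℝ (SP k) := by
  induction k generalizing z with
  | zero =>
    simp only [ab] at hu
    have hz : z = x 0 := by linarith
    subst hz
    have w1 : (Function.update x 0 1, y, (1:ℝ)) ∈ SP 0 := by
      refine ⟨?_, ?_, ?_⟩
      · intro i hi; obtain rfl : i = 0 := by omega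
        simp
      · intro i hi; omega
      · simp
    have w0 : (Function.update x 0 0, y, (0:ℝ)) ∈ SP 0 := by
      refine ⟨?_, ?_, ?_⟩
      · intro i hi; obtain rfl : i = 0 := by omega
        simp
      · intro i hi; omega
      · simp
    have e : (x, y, x 0) = x 0 • (Function.update x 0 1, y, (1:ℝ)) + (1 - x 0) • (Function.update x 0 0, y, (0:ℝ)) := by
      refine Prod.ext ?_ (Prod.ext ?_ ?_)
      · funext i
        rcases eq_or_ne i 0 with rfl | h
        · simp
        · simp [h]; ring
      · funext i
        simp
      · simp
    rw [e]
    exact convex_convexHull ℝ _ (subset_convexHull ℝ _ w1) (subset_convexHull ℝ _ w0) h0.1 (by linarith) (by ring)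
  | succ k ih =>
    obtain ⟨i1, i2, i3, i4, i5, i6, i7⟩ := ab_inv x y k h0 (fun i hi => h i (by omega))
    obtain ⟨l1, l2, l3, l4⟩ := h k (by omega)
    simp only [ab, dE, le_min_iff, sub_le_comm (b := min _ _)] at hu hl
    obtain ⟨hu1, hu2⟩ := hu
    obtain ⟨hl1, hl2⟩ := hl
    obtain ⟨D, d1, d2, d3, d4, d5, e1, e2, e3, e4, e5⟩ := exists_between_five
      ((x 0 + x (k+1) - 2 * z) - (x k + x (k + 1) - 2 * y k)) ((x k + x (k + 1) - 2 * y k) - (x 0 + x (k+1) - 2 * z))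
      (x 0 - x k) (x k - x 0) (1 - (ab x y k).2)
      ((x 0 + x (k+1) - 2 * z) + (x k + x (k + 1) - 2 * y k)) (2 - (x k + x (k + 1) - 2 * y k) - (x 0 + x (k+1) - 2 * z))
      (x 0 + x k) (2 - x 0 - x k) (ab x y k).1 (by
        simp only [List.mem_cons, List.not_mem_nil, or_false, forall_eq_or_imp, forall_eq]
        refine ⟨⟨?_, ?_, ?_, ?_, ?_⟩, ⟨?_, ?_, ?_, ?_, ?_⟩, ⟨?_, ?_, ?_, ?_, ?_⟩, ⟨?_, ?_, ?_, ?_, ?_⟩, ⟨?_, ?_, ?_, ?_, ?_⟩⟩ <;> linarith)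
    have hz := ih (fun i hi => h i (by omega)) ((x 0 + x k - D) / 2) (by linarith) (by linarith) (by linarith) (by linarith) (by linarith) (by linarith)
    set Z := (x 0 + x k - D) / 2 with hZ
    have hD : D = x 0 + x k - 2 * Z := by rw [hZ]; ring
    obtain ⟨k11, k10, k01, k00, h11, h10, h01, h00, f1, f2, f3⟩ := triangle_cond (x 0) (x k) (x (k+1)) Z (y k) z
      (by linarith) (by linarith) (by linarith) (by linarith) (by linarith) (by linarith) (by linarith) (by linarith)
      (by linarith) (by linarith) (by linarith) (by linarith) (by linarith) (by linarith) (by linarith) (by linarith)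
    have := glue k k11 k10 k01 k00 h11 h10 h01 h00 _ hz
    simp only at this
    rw [← f1, ← f2, ← f3, Function.update_eq_self, Function.update_eq_self] at this
    exact this

lemma ab_attained (x y : ℕ → ℝ) (k : ℕ) (h : LocC x y 0) :
    (∃ F : ℕ → Bool, ∏ i ∈ Finset.range (k+1), (if F i then (-1:ℝ) else 1) = 1 ∧
      ∑ i ∈ Finset.range (k+1), (if F i then 1 - dE x y i else dE x y i) = (ab x y (k+1)).1) ∧
    (∃ F : ℕ → Bool, ∏ i ∈ Finset.range (k+1), (if F i then (-1:ℝ) else 1) = -1 ∧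
      ∑ i ∈ Finset.range (k+1), (if F i then 1 - dE x y i else dE x y i) = (ab x y (k+1)).2) := by
  induction k with
  | zero =>
    obtain ⟨l1, l2, l3, l4⟩ := h
    refine ⟨⟨fun _ => false, by simp, ?_⟩, ⟨fun _ => true, by simp, ?_⟩⟩
    · simp only [ab, dE]
      rw [min_eq_left (by linarith)]; simp
    · simp only [ab, dE]
      rw [min_eq_left (by linarith)]; simp
  | succ k ih =>
    obtain ⟨⟨F, f1, f2⟩, ⟨G, g1, g2⟩⟩ := ih
    have ext : ∀ (F : ℕ → Bool) (b : Bool), 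
        ∏ i ∈ Finset.range (k+1+1), (if Function.update F (k+1) b i then (-1:ℝ) else 1) = 
          (∏ i ∈ Finset.range (k+1), (if F i then (-1:ℝ) else 1)) * (if b then -1 else 1) ∧
        ∑ i ∈ Finset.range (k+1+1), (if Function.update F (k+1) b i then 1 - dE x y i else dE x y i) = 
          ∑ i ∈ Finset.range (k+1), (if F i then 1 - dE x y i else dE x y i) + (if b then 1 - dE x y (k+1) else dE x y (k+1)) := by
      intro F b
      rw [Finset.prod_range_succ, Finset.sum_range_succ]
      simp only [Function.update_self]
      constructor
      · congr 1
        refine Finset.prod_congr rfl fun i hi => ?_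
        rw [Function.update_of_ne (by have := Finset.mem_range.mp hi; omega)]
      · congr 1
        refine Finset.sum_congr rfl fun i hi => ?_
        rw [Function.update_of_ne (by have := Finset.mem_range.mp hi; omega)]
    rw [ab]
    constructor
    · rcases min_choice ((ab x y (k+1)).1 + dE x y (k+1)) ((ab x y (k+1)).2 + 1 - dE x y (k+1)) with h | h <;> simp only [h]
      · refine ⟨Function.update F (k+1) false, ?_, ?_⟩
        · rw [(ext F false).1, f1]; simp
        · rw [(ext F false).2, f2]; simp
      · refine ⟨Function.update G (k+1) true, ?_, ?_⟩
        · rw [(ext G true).1, g1]; simp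
        · rw [(ext G true).2, g2]; simp; ring
    · rcases min_choice ((ab x y (k+1)).1 + 1 - dE x y (k+1)) ((ab x y (k+1)).2 + dE x y (k+1)) with h | h <;> simp only [h]
      · refine ⟨Function.update F (k+1) true, ?_, ?_⟩
        · rw [(ext F true).1, f1]; simp
        · rw [(ext F true).2, f2]; simp; ring
      · refine ⟨Function.update G (k+1) false, ?_, ?_⟩
        · rw [(ext G false).1, g1]; simp
        · rw [(ext G false).2, g2]; simp

lemma ofNat_succ_eq (n i : ℕ) : Fin.ofNat (n+1) (i+1) = Fin.ofNat (n+1) i + 1 := by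
  apply Fin.ext
  simp [Fin.ofNat, Fin.val_add]

lemma Qc_diff_subset (n : ℕ) (hn : 1 ≤ n) (p) (hp : p ∈ Qc n) (hP : p ∉ convexHull ℝ (Vc n)) :
    ∃ F : Fin (n+1) → Bool, OddF F ∧ p ∈ Reg F := by
  set x : ℕ → ℝ := fun i => p.1 (Fin.ofNat (n+1) i) with hx
  set y : ℕ → ℝ := fun i => p.2 (Fin.ofNat (n+1) i) with hy
  have hL : ∀ i, LocC x y i := by
    intro i
    have := hp (Fin.ofNat (n+1) i)
    rw [← ofNat_succ_eq] at this
    exact this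
  have hcyc : x (n+1) = x 0 := by simp [hx, Fin.ofNat]
  have hval : ∀ i : Fin (n+1), Fin.ofNat (n+1) i = i := by
    intro i; apply Fin.ext; simp [Fin.ofNat, Nat.mod_eq_of_lt i.2]
  obtain ⟨l1, l2, l3, l4⟩ := hL n
  obtain ⟨m1, m2, m3, m4⟩ := hL 0
  rw [hcyc] at l3 l4
  have hx0 : 0 ≤ x 0 ∧ x 0 ≤ 1 := ⟨by linarith, by linarith⟩
  have build : ∀ F : ℕ → Bool, ∏ i ∈ Finset.range (n+1), (if F i then (-1:ℝ) else 1) = -1 →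
      ∑ i ∈ Finset.range (n+1), (if F i then 1 - dE x y i else dE x y i) < 1 →
      ∃ F : Fin (n+1) → Bool, OddF F ∧ p ∈ Reg F := by
    intro F h1 h2
    refine ⟨fun i => F i, ?_, ?_⟩
    · exact (Fin.prod_univ_eq_prod_range (fun i => if F i then (-1:ℝ) else 1) (n+1)).trans h1
    · have hs := slk_nonneg_of_Qc (fun i : Fin (n+1) => F i) p hp
      refine ⟨fun i => (hs i).1, fun i => (hs i).2, ?_⟩
      rw [← Fin.sum_univ_eq_sum_range (fun i => if F i then 1 - dE x y i else dE x y i)] at h2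
      rw [← Finset.sum_add_distrib]
      refine lt_of_le_of_lt (le_of_eq ?_) h2
      refine Finset.sum_congr rfl fun i _ => ?_
      simp only [dE, hx, hy, slk1, slk2, ofNat_succ_eq, hval]
      split_ifs <;> ring
  have ext : ∀ (F : ℕ → Bool) (b : Bool), 
        ∏ i ∈ Finset.range (n+1), (if Function.update F n b i then (-1:ℝ) else 1) = 
          (∏ i ∈ Finset.range n, (if F i then (-1:ℝ) else 1)) * (if b then -1 else 1) ∧
        ∑ i ∈ Finset.range (n+1), (if Function.update F n b i then 1 - dE x y i else dE x y i) = 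
          ∑ i ∈ Finset.range n, (if F i then 1 - dE x y i else dE x y i) + (if b then 1 - dE x y n else dE x y n) := by
      intro F b
      rw [Finset.prod_range_succ, Finset.sum_range_succ]
      simp only [Function.update_self]
      constructor
      · congr 1
        refine Finset.prod_congr rfl fun i hi => ?_
        rw [Function.update_of_ne (by have := Finset.mem_range.mp hi; omega)]
      · congr 1
        refine Finset.sum_congr rfl fun i hi => ?_
        rw [Function.update_of_ne (by have := Finset.mem_range.mp hi; omega)]
  have hatt := ab_attained x y (n-1) (hL 0)
  rw [show n - 1 + 1 = n by omega] at hatt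
  obtain ⟨⟨F, f1, f2⟩, ⟨G, g1, g2⟩⟩ := hatt
  have hdn : dE x y n = x 0 + x n - 2 * y n := by simp only [dE, hcyc]; ring
  by_cases hu : x 0 + x n - 2 * y n ≤ (ab x y n).1
  swap
  · refine build (Function.update F n true) ?_ ?_
    · rw [(ext F true).1, f1]; simp
    · rw [(ext F true).2, f2]; simp only [if_true]; rw [hdn]; linarith
  by_cases hl : 1 - (ab x y n).2 ≤ x 0 + x n - 2 * y n
  swap
  · refine build (Function.update G n false) ?_ ?_
    · rw [(ext G false).1, g1]; simp
    · rw [(ext G false).2, g2]; simp only [Bool.false_eq_true, if_false]; rw [hdn]; linarith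
  exfalso
  have hmem := path_hull x y n hx0 (fun i _ => hL i) (y n) l1 l3 l2 (by linarith) hu hl
  let R : ((ℕ → ℝ) × (ℕ → ℝ) × ℝ) →ₗ[ℝ] ((Fin (n+1) → ℝ) × (Fin (n+1) → ℝ)) :=
    { toFun := fun q => (fun i => q.1 i, fun i => if (i : ℕ) < n then q.2.1 i else q.2.2)
      map_add' := by
        intro a b
        refine Prod.ext rfl ?_
        funext i
        simp only [Prod.snd_add, Prod.fst_add, Pi.add_apply]
        split_ifs <;> rfl
      map_smul' := by
        intro a b
        refine Prod.ext rfl ?_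
        funext i
        simp only [Prod.smul_snd, Prod.smul_fst, Pi.smul_apply, RingHom.id_apply]
        split_ifs <;> rfl }
  have h1 : R (x, y, y n) ∈ R '' convexHull ℝ (SP n) := ⟨_, hmem, rfl⟩
  rw [R.image_convexHull] at h1
  have h2 : R '' SP n ⊆ Vc n := by
    rintro _ ⟨q, ⟨q1, q2, q3⟩, rfl⟩
    refine ⟨fun i => q1 i (by omega), fun i => ?_⟩
    change (if (i : ℕ) < n then q.2.1 i else q.2.2) = q.1 i * q.1 ((i + 1 : Fin (n+1)) : ℕ)
    split_ifs with h
    · rw [q2 i h, Fin.val_add_one_of_lt (by rw [Fin.lt_def]; simpa using h)]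
    · obtain rfl : i = Fin.last n := by apply Fin.ext; simp; omega
      rw [Fin.last_add_one, q3, mul_comm]; simp
  have h3 : R (x, y, y n) = p := by
    refine Prod.ext ?_ ?_
    · funext i
      change x i = _
      simp only [hx, hval]
    · funext i
      change (if (i : ℕ) < n then y i else y n) = _
      have : (if (i : ℕ) < n then y i else y n) = y i := by
        split_ifs with h
        · rfl
        · congr 1; omega
      rw [this]
      simp only [hy, hval]
  rw [h3] at h1
  exact hP (convexHull_mono h2 h1)

lemma volume_Qc_diff (n : ℕ) (hn : 1 ≤ n) :
    volume (Qc n \ convexHull ℝ (Vc n)) =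
      ENNReal.ofReal (2 ^ n * (1/2 * (1 / (2 * (n+1)).factorial))) := by
  classical
  have e : Qc n \ convexHull ℝ (Vc n) = ⋃ F ∈ Finset.univ.filter (OddF (n := n)), Reg F := by
    ext p
    simp only [Set.mem_sdiff, Set.mem_iUnion, Finset.mem_filter, Finset.mem_univ, true_and, exists_prop]
    constructor
    · rintro ⟨h1, h2⟩
      exact Qc_diff_subset n hn p h1 h2
    · rintro ⟨F, hF, hp⟩
      refine ⟨Reg_subset_Qc F hF hp, fun h => ?_⟩
      have := hull_valid F hF p h
      have := hp.2.2
      linarith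
  rw [e, measure_biUnion_finset]
  · rw [Finset.sum_congr rfl (fun F hF => volume_Reg hn F (Finset.mem_filter.mp hF).2)]
    rw [Finset.sum_const, card_odd, nsmul_eq_mul, ← ENNReal.ofReal_mul (by norm_num), ENNReal.ofReal_mul (p := 2 ^ n) (by positivity)]
    congr 1
    rw [ENNReal.ofReal_pow (by norm_num)]
    simp
  · intro F hF G hG hne
    exact Reg_disjoint F G (Finset.mem_filter.mp hF).2 (Finset.mem_filter.mp hG).2 hne
  · intro F _; exact measurableSet_Reg F

/-- kernel -/
def kr (s t : ℝ) : ℝ := min (min s t) (min (1 - s) (1 - t))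

/-- kernel, extended nonnegative -/
def KE (s t : ℝ) : ENNReal := ENNReal.ofReal (kr s t)

lemma continuous_kr : Continuous (fun p : ℝ × ℝ => kr p.1 p.2) := by unfold kr; fun_prop

lemma measurable_KE {α : Type*} [MeasurableSpace α] {f g : α → ℝ} (hf : Measurable f) (hg : Measurable g) :
    Measurable (fun a => KE (f a) (g a)) :=
  (continuous_kr.measurable.comp (hf.prodMk hg)).ennreal_ofReal

/-- eigenfunction -/
def ph (t : ℝ) : ENNReal := (Set.Icc (0:ℝ) 1).indicator (fun t => ENNReal.ofReal (Real.sin (Real.pi * t))) t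

lemma measurable_ph : Measurable ph := by
  unfold ph
  exact Measurable.indicator (by fun_prop) measurableSet_Icc

lemma integral_tsin (a b : ℝ) : ∫ t in a..b, t * Real.sin (Real.pi * t) =
    (-b * Real.cos (Real.pi * b) / Real.pi + Real.sin (Real.pi * b) / Real.pi ^ 2) -
    (-a * Real.cos (Real.pi * a) / Real.pi + Real.sin (Real.pi * a) / Real.pi ^ 2) := by
  have hpi := Real.pi_ne_zero
  rw [intervalIntegral.integral_eq_sub_of_hasDerivAt
    (f := fun t => -t * Real.cos (Real.pi * t) / Real.pi + Real.sin (Real.pi * t) / Real.pi ^ 2)]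
  · intro t _
    have h1 : HasDerivAt (fun t : ℝ => Real.pi * t) Real.pi t := by simpa using (hasDerivAt_id t).const_mul Real.pi
    have h2 := (((hasDerivAt_id t).neg.mul h1.cos).div_const Real.pi).add (h1.sin.div_const (Real.pi ^ 2))
    refine h2.congr_deriv ?_
    simp
    field_simp
    ring
  · exact Continuous.intervalIntegrable (by fun_prop) _ _

lemma integral_sinpi (a b : ℝ) : ∫ t in a..b, Real.sin (Real.pi * t) =
    (Real.cos (Real.pi * a) - Real.cos (Real.pi * b)) / Real.pi := by
  have hpi := Real.pi_ne_zero
  rw [intervalIntegral.integral_comp_mul_left (fun t => Real.sin t) hpi, integral_sin]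
  simp; field_simp

lemma eigen_real (u : ℝ) (h0 : 0 ≤ u) (h1 : u ≤ 1/2) :
    ∫ t in (0:ℝ)..1, Real.sin (Real.pi * t) * min (min t (1 - t)) u = 2 / Real.pi ^ 2 * Real.sin (Real.pi * u) := by
  have hpi := Real.pi_ne_zero
  have hI : ∀ a b : ℝ, IntervalIntegrable (fun t => Real.sin (Real.pi * t) * min (min t (1 - t)) u) volume a b :=
    fun a b => Continuous.intervalIntegrable (by fun_prop) _ _
  rw [← intervalIntegral.integral_add_adjacent_intervals (hI 0 u) (hI u 1),
    ← intervalIntegral.integral_add_adjacent_intervals (hI u (1-u)) (hI (1-u) 1)]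
  have e1 : ∫ t in (0:ℝ)..u, Real.sin (Real.pi * t) * min (min t (1 - t)) u = ∫ t in (0:ℝ)..u, t * Real.sin (Real.pi * t) := by
    apply intervalIntegral.integral_congr
    intro t ht
    rw [Set.uIcc_of_le h0] at ht
    simp only
    rw [min_eq_left (a := t) (by linarith [ht.2]), min_eq_left ht.2, mul_comm]
  have e2 : ∫ t in u..(1-u), Real.sin (Real.pi * t) * min (min t (1 - t)) u = u * ∫ t in u..(1-u), Real.sin (Real.pi * t) := by
    rw [← intervalIntegral.integral_const_mul]
    apply intervalIntegral.integral_congr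
    intro t ht
    rw [Set.uIcc_of_le (by linarith)] at ht
    simp only
    rw [min_eq_right (b := u) (le_min ht.1 (by linarith [ht.2])), mul_comm]
  have e3 : ∫ t in (1-u)..1, Real.sin (Real.pi * t) * min (min t (1 - t)) u =
      (∫ t in (1-u)..1, Real.sin (Real.pi * t)) - ∫ t in (1-u)..1, t * Real.sin (Real.pi * t) := by
    rw [← intervalIntegral.integral_sub (Continuous.intervalIntegrable (by fun_prop) _ _) (Continuous.intervalIntegrable (by fun_prop) _ _)]
    apply intervalIntegral.integral_congr
    intro t ht
    rw [Set.uIcc_of_le (by linarith)] at ht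
    simp only
    rw [min_eq_right (b := 1 - t) (by linarith [ht.1]), min_eq_left (by linarith [ht.1])]
    ring
  have c1 : Real.cos (Real.pi * (1 - u)) = - Real.cos (Real.pi * u) := by
    rw [mul_sub, mul_one, Real.cos_pi_sub]
  have s1 : Real.sin (Real.pi * (1 - u)) = Real.sin (Real.pi * u) := by
    rw [mul_sub, mul_one, Real.sin_pi_sub]
  rw [e1, e2, e3, integral_tsin, integral_tsin, integral_sinpi, integral_sinpi, c1, s1]
  simp
  field_simp
  ring

lemma sin_nonneg_Icc {t : ℝ} (ht : t ∈ Set.Icc (0:ℝ) 1) : 0 ≤ Real.sin (Real.pi * t) :=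
  Real.sin_nonneg_of_nonneg_of_le_pi (mul_nonneg Real.pi_pos.le ht.1)
    (by nlinarith [ht.2, Real.pi_pos])

lemma KE_eq_zero_left {s t : ℝ} (h : s ∉ Set.Icc (0:ℝ) 1) : KE s t = 0 := by
  unfold KE kr
  apply ENNReal.ofReal_of_nonpos
  by_contra! hc
  simp only [lt_min_iff] at hc
  exact h ⟨by linarith, by linarith⟩

lemma KE_eq_zero_right {s t : ℝ} (h : t ∉ Set.Icc (0:ℝ) 1) : KE s t = 0 := by
  unfold KE kr
  apply ENNReal.ofReal_of_nonpos
  by_contra! hc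
  simp only [lt_min_iff] at hc
  exact h ⟨by linarith, by linarith⟩

/-- eigenvalue -/
def lam : ℝ := 2 / Real.pi ^ 2

lemma sin_pi_min (s : ℝ) : Real.sin (Real.pi * min s (1 - s)) = Real.sin (Real.pi * s) := by
  rcases min_choice s (1 - s) with h | h <;> rw [h]
  rw [mul_sub, mul_one, Real.sin_pi_sub]

lemma eigen (s : ℝ) : ∫⁻ t, ph t * KE t s = ENNReal.ofReal lam * ph s := by
  by_cases hs : s ∈ Set.Icc (0:ℝ) 1
  · have e : ∀ t, ph t * KE t s = (Set.Icc (0:ℝ) 1).indicator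
        (fun t => ENNReal.ofReal (Real.sin (Real.pi * t) * min (min t (1 - t)) (min s (1 - s)))) t := by
      intro t
      by_cases ht : t ∈ Set.Icc (0:ℝ) 1
      · simp only [ph, Set.indicator_of_mem ht, KE, kr]
        rw [← ENNReal.ofReal_mul (sin_nonneg_Icc ht), min_min_min_comm]
      · simp only [ph, Set.indicator_of_notMem ht, zero_mul]
    simp_rw [e]
    rw [lintegral_indicator measurableSet_Icc, ← restrict_Ioc_eq_restrict_Icc, ← ofReal_integral_eq_lintegral_ofReal,
      ← intervalIntegral.integral_of_le zero_le_one, eigen_real]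
    · simp only [ph, Set.indicator_of_mem hs]
      rw [sin_pi_min, ENNReal.ofReal_mul (by positivity), lam]
    · exact le_min hs.1 (by linarith [hs.2])
    · by_contra! hc
      rw [lt_min_iff] at hc; linarith
    · exact ((by fun_prop : Continuous fun t : ℝ => Real.sin (Real.pi * t) * min (min t (1 - t)) (min s (1 - s))).integrableOn_Icc).mono_set Set.Ioc_subset_Icc_self
    · filter_upwards [ae_restrict_mem measurableSet_Ioc] with t ht
      refine mul_nonneg (sin_nonneg_Icc ⟨ht.1.le, ht.2⟩) (le_min (le_min ht.1.le (by linarith [ht.2])) (le_min hs.1 (by linarith [hs.2])))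
  · simp [KE_eq_zero_right hs, ph, Set.indicator_of_notMem hs]

lemma path_integral (n : ℕ) (g : ℝ → ENNReal) (hg : Measurable g) :
    ∫⁻ x : Fin (n+1) → ℝ, ph (x 0) * (∏ i : Fin n, KE (x i.castSucc) (x i.succ)) * g (x (Fin.last n)) =
      ENNReal.ofReal lam ^ n * ∫⁻ t, ph t * g t := by
  have hmeas : ∀ n : ℕ, Measurable (fun x : Fin (n+1) → ℝ => (∏ i : Fin n, KE (x i.castSucc) (x i.succ)) * g (x (Fin.last n))) := by
    intro n
    refine Measurable.mul (Finset.measurable_prod _ fun i _ => measurable_KE (measurable_pi_apply _) (measurable_pi_apply _)) (hg.comp (measurable_pi_apply _))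
  induction n with
  | zero =>
    have h := (volume_preserving_funUnique (Fin 1) ℝ)
    simp only [Finset.univ_eq_empty, Finset.prod_empty, mul_one, pow_zero, one_mul]
    have hm : Measurable (fun t => ph t * g t) := measurable_ph.mul hg
    rw [← h.lintegral_comp hm]
    rfl
  | succ n ih =>
    rw [lintegral_fin_cons _ _ (by
      simp_rw [mul_assoc]
      exact (measurable_ph.comp (measurable_pi_apply _)).mul (hmeas (n+1)))]
    have e : ∀ x' : Fin (n+1) → ℝ, ∫⁻ t : ℝ, (ph ((Fin.cons t x' : Fin (n+2) → ℝ) 0) *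
        (∏ i : Fin (n+1), KE ((Fin.cons t x' : Fin (n+2) → ℝ) i.castSucc) ((Fin.cons t x' : Fin (n+2) → ℝ) i.succ)) *
        g ((Fin.cons t x' : Fin (n+2) → ℝ) (Fin.last (n+1)))) =
        ENNReal.ofReal lam * (ph (x' 0) * (∏ i : Fin n, KE (x' i.castSucc) (x' i.succ)) * g (x' (Fin.last n))) := by
      intro x'
      have : ∀ t, (ph ((Fin.cons t x' : Fin (n+2) → ℝ) 0) *
        (∏ i : Fin (n+1), KE ((Fin.cons t x' : Fin (n+2) → ℝ) i.castSucc) ((Fin.cons t x' : Fin (n+2) → ℝ) i.succ)) *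
        g ((Fin.cons t x' : Fin (n+2) → ℝ) (Fin.last (n+1)))) = (ph t * KE t (x' 0)) * ((∏ i : Fin n, KE (x' i.castSucc) (x' i.succ)) * g (x' (Fin.last n))) := by
        intro t
        rw [Fin.prod_univ_succ, ← Fin.succ_last]
        simp only [Fin.cons_zero, Fin.cons_succ, Fin.castSucc_zero, ← Fin.succ_castSucc]
        ring
      simp_rw [this]
      have hm : Measurable (fun t => ph t * KE t (x' 0)) := measurable_ph.mul (measurable_KE measurable_id measurable_const)
      rw [lintegral_mul_const _ hm, eigen]
      ring
    simp_rw [e]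
    rw [lintegral_const_mul, ih, pow_succ]
    · ring
    · simp_rw [mul_assoc]
      exact (measurable_ph.comp (measurable_pi_apply _)).mul (hmeas n)

lemma kr_eq (s t : ℝ) : min s t - max 0 (s + t - 1) = min (min s t) (min (1 - s) (1 - t)) := by
  rcases le_total s t with h | h <;> rcases le_total (s + t) 1 with h' | h'
  · rw [min_eq_left h, min_eq_right (show 1 - t ≤ 1 - s by linarith), min_eq_left (show s ≤ 1 - t by linarith), max_eq_left (by linarith)]; ring
  · rw [min_eq_left h, min_eq_right (show 1 - t ≤ 1 - s by linarith), min_eq_right (show 1 - t ≤ s by linarith), max_eq_right (by linarith)]; ring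
  · rw [min_eq_right h, min_eq_left (show 1 - s ≤ 1 - t by linarith), min_eq_left (show t ≤ 1 - s by linarith), max_eq_left (by linarith)]; ring
  · rw [min_eq_right h, min_eq_left (show 1 - s ≤ 1 - t by linarith), min_eq_right (show 1 - s ≤ t by linarith), max_eq_right (by linarith)]; ring

lemma volume_Qc_eq (n : ℕ) : volume (Qc n) = ∫⁻ x : Fin (n+1) → ℝ, ∏ i, KE (x i) (x (i+1)) := by
  have hm : MeasurableSet (Qc n) := by
    have : Qc n = ⋂ i, ({p | 0 ≤ p.2 i} ∩ ({p | p.2 i ≤ p.1 i} ∩ ({p | p.2 i ≤ p.1 (i+1)} ∩ {p | p.1 i + p.1 (i+1) ≤ 1 + p.2 i}))) := by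
      ext p; simp [Qc]
    rw [this]
    refine MeasurableSet.iInter fun i => ?_
    refine ((measurableSet_le ?_ ?_).inter ((measurableSet_le ?_ ?_).inter ((measurableSet_le ?_ ?_).inter (measurableSet_le ?_ ?_)))) <;> fun_prop
  rw [Measure.volume_eq_prod, Measure.prod_apply hm]
  congr 1
  funext x
  have : Prod.mk x ⁻¹' Qc n = Set.pi Set.univ (fun i => Set.Icc (max 0 (x i + x (i+1) - 1)) (min (x i) (x (i+1)))) := by
    ext y
    simp only [Qc, Set.mem_preimage, Set.mem_ofPred_eq, Set.mem_pi, Set.mem_univ, true_imp_iff, Set.mem_Icc, max_le_iff, le_min_iff]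
    refine forall_congr' fun i => ?_
    constructor
    · rintro ⟨h1, h2, h3, h4⟩; exact ⟨⟨h1, by linarith⟩, h2, h3⟩
    · rintro ⟨⟨h1, h4⟩, h2, h3⟩; exact ⟨h1, h2, h3, by linarith⟩
  rw [this, volume_pi_pi]
  refine Finset.prod_congr rfl fun i _ => ?_
  rw [Real.volume_Icc, KE, kr]
  congr 1
  exact kr_eq _ _

lemma prod_cycle (n : ℕ) (x : Fin (n+1) → ℝ) : ∏ i, KE (x i) (x (i+1)) =
    (∏ i : Fin n, KE (x i.castSucc) (x i.succ)) * KE (x (Fin.last n)) (x 0) := by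
  rw [Fin.prod_univ_castSucc, Fin.last_add_one]
  simp only [Fin.coeSucc_eq_succ]

lemma min_le_sin {s : ℝ} (hs : s ∈ Set.Icc (0:ℝ) 1) : 2 * min s (1 - s) ≤ Real.sin (Real.pi * s) := by
  have h0 : 0 ≤ min s (1-s) := le_min hs.1 (by linarith [hs.2])
  have h1 : min s (1-s) ≤ 1/2 := by
    by_contra! hc
    rw [lt_min_iff] at hc; linarith
  rw [← sin_pi_min]
  have := Real.mul_le_sin (x := Real.pi * min s (1-s)) (by positivity) (by nlinarith [Real.pi_pos])
  have e : 2 / Real.pi * (Real.pi * min s (1-s)) = 2 * min s (1-s) := by field_simp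
  linarith

lemma sin_le_min {s : ℝ} (hs : s ∈ Set.Icc (0:ℝ) 1) : Real.sin (Real.pi * s) ≤ Real.pi * min s (1 - s) := by
  have h0 : 0 ≤ min s (1-s) := le_min hs.1 (by linarith [hs.2])
  rw [← sin_pi_min]
  exact Real.sin_le (by positivity)

lemma volume_Qc_le (n : ℕ) : volume (Qc n) ≤ ENNReal.ofReal (lam ^ n) := by
  rw [volume_Qc_eq]
  set g : ℝ → ENNReal := (Set.Icc (0:ℝ) 1).indicator (fun _ => 1) with hg
  have hgm : Measurable g := measurable_const.indicator measurableSet_Icc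
  calc _ ≤ ∫⁻ x : Fin (n+1) → ℝ, ph (x 0) * (∏ i : Fin n, KE (x i.castSucc) (x i.succ)) * g (x (Fin.last n)) := by
        refine lintegral_mono fun x => ?_
        simp only
        rw [prod_cycle, mul_comm (ph _), mul_assoc]
        refine mul_le_mul_right ?_ _
        by_cases h1 : x 0 ∈ Set.Icc (0:ℝ) 1
        swap
        · rw [KE_eq_zero_right h1]; exact zero_le
        by_cases h2 : x (Fin.last n) ∈ Set.Icc (0:ℝ) 1
        swap
        · rw [KE_eq_zero_left h2]; exact zero_le
        simp only [hg, ph, Set.indicator_of_mem h1, Set.indicator_of_mem h2, mul_one, KE]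
        refine ENNReal.ofReal_le_ofReal ?_
        have := min_le_sin h1
        have h0 : 0 ≤ min (x 0) (1-x 0) := le_min h1.1 (by linarith [h1.2])
        have : kr (x (Fin.last n)) (x 0) ≤ min (x 0) (1 - x 0) := by
          unfold kr
          exact le_min ((min_le_left _ _).trans (min_le_right _ _)) ((min_le_right _ _).trans (min_le_right _ _))
        linarith
    _ = ENNReal.ofReal lam ^ n * ∫⁻ t, ph t * g t := path_integral n g hgm
    _ ≤ ENNReal.ofReal lam ^ n * ∫⁻ t, (Set.Icc (0:ℝ) 1).indicator (fun _ => 1) t := by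
        refine mul_le_mul_right ?_ _
        refine lintegral_mono fun t => ?_
        by_cases h1 : t ∈ Set.Icc (0:ℝ) 1
        · simp only [hg, ph, Set.indicator_of_mem h1, mul_one]
          rw [← ENNReal.ofReal_one]
          exact ENNReal.ofReal_le_ofReal (Real.sin_le_one _)
        · simp [ph, Set.indicator_of_notMem h1]
    _ = _ := by
        rw [lintegral_indicator measurableSet_Icc]
        simp only [setLIntegral_const, Real.volume_Icc]
        rw [ENNReal.ofReal_pow (by unfold lam; positivity)]
        simp

lemma le_volume_Qc (n : ℕ) : ENNReal.ofReal (lam ^ n * (1 / (16 * Real.pi ^ 2))) ≤ volume (Qc n) := by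
  rw [volume_Qc_eq]
  have hpi := Real.pi_pos
  set g : ℝ → ENNReal := fun t => ENNReal.ofReal (1 / Real.pi ^ 2) * ph t with hg
  have hgm : Measurable g := measurable_ph.const_mul _
  have e : ENNReal.ofReal lam ^ n * ∫⁻ t, ph t * g t ≤ ∫⁻ x : Fin (n+1) → ℝ, ∏ i, KE (x i) (x (i+1)) := by
    rw [← path_integral n g hgm]
    refine lintegral_mono fun x => ?_
    simp only
    rw [prod_cycle, mul_comm (ph _), mul_assoc]
    refine mul_le_mul_right ?_ _
    by_cases h1 : x 0 ∈ Set.Icc (0:ℝ) 1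
    swap
    · simp [ph, Set.indicator_of_notMem h1]
    by_cases h2 : x (Fin.last n) ∈ Set.Icc (0:ℝ) 1
    swap
    · simp [hg, ph, Set.indicator_of_notMem h2]
    simp only [hg, ph, Set.indicator_of_mem h1, Set.indicator_of_mem h2, KE]
    rw [← ENNReal.ofReal_mul (by positivity), ← ENNReal.ofReal_mul (sin_nonneg_Icc h1)]
    refine ENNReal.ofReal_le_ofReal ?_
    set a := x 0
    set b := x (Fin.last n)
    have ha := sin_le_min h1
    have hb := sin_le_min h2
    have ha0 : 0 ≤ min a (1-a) := le_min h1.1 (by linarith [h1.2])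
    have hb0 : 0 ≤ min b (1-b) := le_min h2.1 (by linarith [h2.2])
    have ha1 : min a (1-a) ≤ 1 := (min_le_left _ _).trans h1.2
    have hb1 : min b (1-b) ≤ 1 := (min_le_left _ _).trans h2.2
    have hk : kr b a = min (min b (1-b)) (min a (1-a)) := by unfold kr; rw [min_min_min_comm]
    have h3 : Real.sin (Real.pi * a) * Real.sin (Real.pi * b) ≤ (Real.pi * min a (1-a)) * (Real.pi * min b (1-b)) :=
      mul_le_mul ha hb (sin_nonneg_Icc h2) (by positivity)
    calc Real.sin (Real.pi * a) * (1 / Real.pi ^ 2 * Real.sin (Real.pi * b))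
        = (1 / Real.pi ^ 2) * (Real.sin (Real.pi * a) * Real.sin (Real.pi * b)) := by ring
      _ ≤ (1 / Real.pi ^ 2) * ((Real.pi * min a (1-a)) * (Real.pi * min b (1-b))) := by gcongr
      _ = min a (1-a) * min b (1-b) := by field_simp
      _ ≤ kr b a := by
        rw [hk]
        exact le_min (by nlinarith) (by nlinarith)
  refine le_trans ?_ e
  rw [ENNReal.ofReal_mul (by unfold lam; positivity), ENNReal.ofReal_pow (by unfold lam; positivity)]
  refine mul_le_mul_right ?_ _
  calc ENNReal.ofReal (1 / (16 * Real.pi ^ 2)) = ∫⁻ t, (Set.Icc (1/4:ℝ) (1/2)).indicator (fun _ => ENNReal.ofReal (1 / (4 * Real.pi ^ 2))) t := by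
        rw [lintegral_indicator measurableSet_Icc]
        simp only [setLIntegral_const, Real.volume_Icc]
        rw [← ENNReal.ofReal_mul (by positivity)]
        congr 1
        field_simp; norm_num
    _ ≤ _ := by
        refine lintegral_mono fun t => ?_
        by_cases h : t ∈ Set.Icc (1/4:ℝ) (1/2)
        swap
        · rw [Set.indicator_of_notMem h]; exact zero_le
        have h1 : t ∈ Set.Icc (0:ℝ) 1 := ⟨by linarith [h.1], by linarith [h.2]⟩
        simp only [hg, ph, Set.indicator_of_mem h1, Set.indicator_of_mem h]
        rw [← ENNReal.ofReal_mul (by positivity), ← ENNReal.ofReal_mul (sin_nonneg_Icc h1)]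
        refine ENNReal.ofReal_le_ofReal ?_
        have h2 := min_le_sin h1
        rw [min_eq_left (by linarith [h.2])] at h2
        have h3 : 1/2 ≤ Real.sin (Real.pi * t) := by linarith [h.1]
        have h4 : 1/4 ≤ Real.sin (Real.pi * t) * Real.sin (Real.pi * t) := by nlinarith
        calc 1 / (4 * Real.pi ^ 2) = 1 / Real.pi ^ 2 * (1/4) := by field_simp
          _ ≤ 1 / Real.pi ^ 2 * (Real.sin (Real.pi * t) * Real.sin (Real.pi * t)) := by gcongr
          _ = _ := by ring


lemma cycleG_adj (n : ℕ) (hn : 2 ≤ n) (i j : Fin (n+1)) : (cycleG (n+1)).Adj i j ↔ j = i + 1 ∨ i = j + 1 := by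
  have key : ∀ a b : Fin (n+1), ((a:ℕ)+1) % (n+1) = (b:ℕ) ↔ b = a + 1 := by
    intro a b
    rw [Fin.ext_iff, Fin.val_add]
    have : ((1 : Fin (n+1)) : ℕ) = 1 := by
      rw [Fin.coe_ofNat_eq_mod]; exact Nat.mod_eq_of_lt (by omega)
    rw [this, eq_comm]
  rw [cycleG, SimpleGraph.fromRel_adj, key, key]
  constructor
  · exact fun h => h.2
  · intro h
    refine ⟨?_, h⟩
    rintro rfl
    have h1 : i = i + 1 := by tauto
    have := (key i i).2 h1
    have hi := i.2
    rcases Nat.lt_or_ge ((i:ℕ)+1) (n+1) with h | h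
    · rw [Nat.mod_eq_of_lt h] at this; omega
    · rw [show (i:ℕ)+1 = n+1 by omega, Nat.mod_self] at this; omega

/-- the edge from i to i+1 -/
def edgeMap (n : ℕ) (hn : 2 ≤ n) (i : Fin (n+1)) : (cycleG (n+1)).edgeSet :=
  ⟨s(i, i+1), (SimpleGraph.mem_edgeSet _).mpr ((cycleG_adj n hn i (i+1)).2 (Or.inl rfl))⟩

lemma edgeMap_bij (n : ℕ) (hn : 2 ≤ n) : Function.Bijective (edgeMap n hn) := by
  constructor
  · intro i j h
    have h' : s(i, i+1) = s(j, j+1) := congrArg Subtype.val h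
    rw [Sym2.eq_iff] at h'
    rcases h' with h' | ⟨h1, h2⟩
    · exact h'.1
    · exfalso
      have h3 : j + 1 + 1 = j := by rw [← h1]; exact h2
      have h4 : (1 : Fin (n+1)) + 1 = 0 := by
        have : j + (1 + 1) = j + 0 := by rw [← add_assoc, h3, add_zero]
        exact add_left_cancel this
      have h5 := congrArg Fin.val h4
      have h1' : ((1 : Fin (n+1)) : ℕ) = 1 := by
        rw [Fin.coe_ofNat_eq_mod]; exact Nat.mod_eq_of_lt (by omega)
      rw [Fin.val_add, h1', Nat.mod_eq_of_lt (by omega)] at h5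
      simp at h5
  · rintro ⟨e, he⟩
    induction e using Sym2.ind with
    | _ i j =>
      rcases (cycleG_adj n hn i j).1 ((SimpleGraph.mem_edgeSet _).1 he) with h | h
      · exact ⟨i, by subst h; rfl⟩
      · exact ⟨j, by subst h; exact Subtype.ext Sym2.eq_swap⟩

/-- index equivalence -/
def edgeEquiv (n : ℕ) (hn : 2 ≤ n) : Fin (n+1) ≃ (cycleG (n+1)).edgeSet :=
  Equiv.ofBijective _ (edgeMap_bij n hn)

/-- coordinate change -/
def coordE (n : ℕ) (hn : 2 ≤ n) : ((Fin (n+1) → ℝ) × (Fin (n+1) → ℝ)) ≃ₗ[ℝ] ((Fin (n+1) → ℝ) × (↥(cycleG (n+1)).edgeSet → ℝ)) :=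
  LinearEquiv.prodCongr (LinearEquiv.refl ℝ _) (LinearEquiv.funCongrLeft ℝ ℝ (edgeEquiv n hn).symm)

lemma coordE_fst (n : ℕ) (hn : 2 ≤ n) (p) : (coordE n hn p).1 = p.1 := rfl

lemma coordE_snd (n : ℕ) (hn : 2 ≤ n) (p) (i : Fin (n+1)) : (coordE n hn p).2 (edgeMap n hn i) = p.2 i := by
  change p.2 ((edgeEquiv n hn).symm (edgeEquiv n hn i)) = p.2 i
  rw [Equiv.symm_apply_apply]

lemma edge_forall (n : ℕ) (hn : 2 ≤ n) (P : ∀ i j : Fin (n+1), (cycleG (n+1)).edgeSet → Prop)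
    (hP : ∀ i j e, P i j e → P j i e) :
    (∀ (i j : Fin (n+1)) (h : (cycleG (n+1)).Adj i j), P i j ⟨s(i, j), (SimpleGraph.mem_edgeSet _).mpr h⟩) ↔
    ∀ i, P i (i+1) (edgeMap n hn i) := by
  constructor
  · intro h i
    exact h i (i+1) ((cycleG_adj n hn i (i+1)).2 (Or.inl rfl))
  · intro h i j hij
    rcases (cycleG_adj n hn i j).1 hij with h' | h'
    · subst h'; exact h i
    · subst h'
      have := hP _ _ _ (h j)
      convert this using 1
      exact Subtype.ext Sym2.eq_swap

lemma QSet_pre (n : ℕ) (hn : 2 ≤ n) : coordE n hn ⁻¹' QSet (cycleG (n+1)) = Qc n := by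
  ext p
  simp only [Set.mem_preimage, QSet, Qc, Set.mem_ofPred_eq]
  rw [edge_forall n hn (fun i j e => 0 ≤ (coordE n hn p).2 e ∧ (coordE n hn p).2 e ≤ (coordE n hn p).1 i ∧
      (coordE n hn p).2 e ≤ (coordE n hn p).1 j ∧ (coordE n hn p).1 i + (coordE n hn p).1 j ≤ 1 + (coordE n hn p).2 e)]
  · simp only [coordE_snd, coordE_fst]
    constructor
    · exact fun h => h.2.2
    · intro h
      have hx : ∀ i, p.1 i ∈ Set.Icc (0:ℝ) 1 := fun i => by
        obtain ⟨h1, h2, h3, h4⟩ := h i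
        exact ⟨by linarith, by linarith⟩
      refine ⟨hx, ?_, h⟩
      intro e
      obtain ⟨i, rfl⟩ := (edgeMap_bij n hn).2 e
      rw [coordE_snd]
      exact ⟨(h i).1, (h i).2.1.trans (hx i).2⟩
  · rintro i j e ⟨h1, h2, h3, h4⟩
    exact ⟨h1, h3, h2, by linarith⟩

lemma BQP_pre (n : ℕ) (hn : 2 ≤ n) : coordE n hn ⁻¹' BQPSet (cycleG (n+1)) = convexHull ℝ (Vc n) := by
  have h : {p : (Fin (n+1) → ℝ) × (↥(cycleG (n+1)).edgeSet → ℝ) | (∀ i, p.1 i = 0 ∨ p.1 i = 1) ∧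
    ∀ (i j : Fin (n+1)) (h : (cycleG (n+1)).Adj i j),
      p.2 ⟨s(i, j), (SimpleGraph.mem_edgeSet _).mpr h⟩ = p.1 i * p.1 j} = (coordE n hn).toLinearMap '' Vc n := by
    rw [LinearEquiv.coe_coe, (coordE n hn).image_eq_preimage_symm]
    ext q
    obtain ⟨p, rfl⟩ := (coordE n hn).surjective q
    rw [Set.mem_preimage, LinearEquiv.symm_apply_apply]
    simp only [Vc, Set.mem_ofPred_eq]
    rw [edge_forall n hn (fun i j e => (coordE n hn p).2 e = (coordE n hn p).1 i * (coordE n hn p).1 j)]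
    · simp only [coordE_snd, coordE_fst]
    · intro i j e h; rw [h, mul_comm]
  rw [BQPSet, h, ← LinearMap.image_convexHull, LinearEquiv.coe_coe, Set.preimage_image_eq _ (coordE n hn).injective]

lemma coordE_mp (n : ℕ) (hn : 2 ≤ n) (s : Set ((Fin (n+1) → ℝ) × (↥(cycleG (n+1)).edgeSet → ℝ))) :
    volume (coordE n hn ⁻¹' s) = volume s := by
  have h1 := volume_measurePreserving_piCongrLeft (fun _ : (cycleG (n+1)).edgeSet => ℝ) (edgeEquiv n hn)
  have h2 := (MeasurePreserving.id (volume : Measure (Fin (n+1) → ℝ))).prod h1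
  let ee := (MeasurableEquiv.refl (Fin (n+1) → ℝ)).prodCongr (MeasurableEquiv.piCongrLeft (fun _ : (cycleG (n+1)).edgeSet => ℝ) (edgeEquiv n hn))
  have h3 : MeasurePreserving ee volume volume := h2
  have h4 : (coordE n hn : _ → _) = ee := by
    funext p
    refine Prod.ext rfl ?_
    funext e
    obtain ⟨i, rfl⟩ := (edgeEquiv n hn).surjective e
    change p.2 ((edgeEquiv n hn).symm (edgeEquiv n hn i)) = Equiv.piCongrLeft (fun _ : (cycleG (n+1)).edgeSet => ℝ) (edgeEquiv n hn) p.2 (edgeEquiv n hn i)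
    rw [Equiv.symm_apply_apply, Equiv.piCongrLeft_apply_apply]
  rw [h4]
  exact h3.measure_preimage_equiv s

lemma volume_QSet (n : ℕ) (hn : 2 ≤ n) : volume (QSet (cycleG (n+1))) = volume (Qc n) := by
  rw [← coordE_mp n hn, QSet_pre]

lemma volume_QSet_diff (n : ℕ) (hn : 2 ≤ n) : volume (QSet (cycleG (n+1)) \ BQPSet (cycleG (n+1))) =
    volume (Qc n \ convexHull ℝ (Vc n)) := by
  rw [← coordE_mp n hn, Set.preimage_sdiff, QSet_pre, BQP_pre]


lemma tendsto_inv_two_mul : Tendsto (fun m : ℕ => 1 / (2 * (m : ℝ))) atTop (nhds 0) := by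
  have h : Tendsto (fun m : ℕ => 2 * (m : ℝ)) atTop atTop :=
    tendsto_natCast_atTop_atTop.const_mul_atTop (by norm_num)
  simp only [one_div]
  exact h.inv_tendsto_atTop

lemma root_lim (a d : ℝ) (ha : 0 < a) (hd : 0 < d) :
    Tendsto (fun m : ℕ => (a ^ m * d) ^ (1 / (2 * (m : ℝ)))) atTop (nhds (Real.sqrt a)) := by
  have h1 : Tendsto (fun m : ℕ => Real.sqrt a * d ^ (1 / (2 * (m : ℝ)))) atTop (nhds (Real.sqrt a * d ^ (0:ℝ))) :=
    (tendsto_const_nhds.rpow tendsto_inv_two_mul (Or.inl hd.ne')).const_mul _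
  rw [Real.rpow_zero, mul_one] at h1
  refine h1.congr' ?_
  filter_upwards [eventually_ge_atTop 1] with m hm
  have hm0 : (m : ℝ) ≠ 0 := by positivity
  rw [Real.mul_rpow (by positivity) hd.le, ← Real.rpow_natCast, ← Real.rpow_mul ha.le, Real.sqrt_eq_rpow]
  congr 2
  field_simp

lemma factorial_root : Tendsto (fun k : ℕ => (k.factorial : ℝ) ^ (1 / (k : ℝ)) / k) atTop (nhds (1 / Real.exp 1)) := by
  have hk0 : Tendsto (fun k : ℕ => 1 / (k : ℝ)) atTop (nhds 0) := by
    simpa only [one_div] using tendsto_inv_atTop_nhds_zero_nat (𝕜 := ℝ)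
  have h1 := Stirling.tendsto_stirlingSeq_sqrt_pi.rpow hk0 (Or.inl (by positivity))
  have h2' : Tendsto (fun k : ℕ => 2 * (k : ℝ)) atTop atTop :=
    tendsto_natCast_atTop_atTop.const_mul_atTop (by norm_num)
  have h2 := tendsto_rpow_div.comp h2'
  have h3 := (h1.mul h2).mul_const (1 / Real.exp 1)
  rw [Real.rpow_zero, one_mul, one_mul] at h3
  refine h3.congr' ?_
  filter_upwards [eventually_ge_atTop 1] with k hk
  have hk0 : (k : ℝ) ≠ 0 := by positivity
  have hS : 0 ≤ Stirling.stirlingSeq k := by unfold Stirling.stirlingSeq; positivity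
  have e : (k.factorial : ℝ) = Stirling.stirlingSeq k * (Real.sqrt (2 * k) * (k / Real.exp 1) ^ k) := by
    unfold Stirling.stirlingSeq
    have : Real.sqrt (2 * k) * (k / Real.exp 1) ^ k ≠ 0 := by positivity
    field_simp
  rw [e, Real.mul_rpow hS (by positivity), Real.mul_rpow (by positivity) (by positivity),
    ← Real.rpow_natCast (k / Real.exp 1), ← Real.rpow_mul (by positivity), Real.sqrt_eq_rpow,
    ← Real.rpow_mul (by positivity)]
  rw [show (k:ℝ) * (1 / k) = 1 by field_simp, Real.rpow_one,
    show 1 / 2 * (1 / (k:ℝ)) = 1 / (2 * k) by field_simp]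
  simp only [Function.comp]
  field_simp

lemma part_a : Tendsto (fun m : ℕ =>
      (volume (QSet (cycleG m))).toReal ^ (1 / (2 * (m : ℝ))))
      atTop (nhds (Real.sqrt 2 / Real.pi)) := by
  have hpi := Real.pi_pos
  have hl : 0 < lam := by unfold lam; positivity
  have hs : Real.sqrt 2 / Real.pi = Real.sqrt lam := by
    unfold lam
    rw [Real.sqrt_div (by norm_num), Real.sqrt_sq hpi.le]
  rw [hs]
  refine tendsto_of_tendsto_of_tendsto_of_le_of_le' (root_lim lam (1 / (16 * Real.pi ^ 2) / lam) hl (by positivity))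
    (root_lim lam (1 / lam) hl (by positivity)) ?_ ?_
  · filter_upwards [eventually_ge_atTop 3] with m hm
    obtain ⟨n, rfl⟩ : ∃ n, m = n + 1 := ⟨m - 1, by omega⟩
    refine Real.rpow_le_rpow (by positivity) ?_ (by positivity)
    rw [volume_QSet n (by omega)]
    have h := ENNReal.toReal_mono (ne_top_of_le_ne_top ENNReal.ofReal_ne_top (volume_Qc_le n)) (le_volume_Qc n)
    rw [ENNReal.toReal_ofReal (by positivity)] at h
    refine le_trans (le_of_eq ?_) h
    rw [pow_succ]; field_simp
  · filter_upwards [eventually_ge_atTop 3] with m hm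
    obtain ⟨n, rfl⟩ : ∃ n, m = n + 1 := ⟨m - 1, by omega⟩
    refine Real.rpow_le_rpow (by positivity) ?_ (by positivity)
    rw [volume_QSet n (by omega)]
    have h := ENNReal.toReal_mono ENNReal.ofReal_ne_top (volume_Qc_le n)
    rw [ENNReal.toReal_ofReal (by positivity)] at h
    refine le_trans h (le_of_eq ?_)
    rw [pow_succ]; field_simp

lemma part_b : Tendsto (fun m : ℕ =>
      (m : ℝ) * (volume (QSet (cycleG m) \ BQPSet (cycleG m))).toReal ^
        (1 / (2 * (m : ℝ))))
      atTop (nhds (Real.exp 1 / Real.sqrt 2)) := by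
  have h2m : Tendsto (fun m : ℕ => 2 * m) atTop atTop := tendsto_id.const_mul_atTop' (by norm_num)
  have h1 := ((factorial_root.comp h2m).inv₀ (by positivity)).mul (root_lim 2 (1/4) (by norm_num) (by norm_num))
  have h2 := h1.const_mul (1/2)
  have e : 1 / 2 * ((1 / Real.exp 1)⁻¹ * Real.sqrt 2) = Real.exp 1 / Real.sqrt 2 := by
    have : Real.sqrt 2 * Real.sqrt 2 = 2 := Real.mul_self_sqrt (by norm_num)
    have h0 : Real.sqrt 2 ≠ 0 := by positivity
    rw [eq_div_iff h0]
    simp only [one_div, inv_inv]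
    linear_combination (Real.exp 1 / 2) * this
  rw [e] at h2
  refine h2.congr' ?_
  filter_upwards [eventually_ge_atTop 3] with m hm
  obtain ⟨n, rfl⟩ : ∃ n, m = n + 1 := ⟨m - 1, by omega⟩
  rw [volume_QSet_diff n (by omega), volume_Qc_diff n (by omega), ENNReal.toReal_ofReal (by positivity)]
  simp only [Function.comp]
  have hf : ((2 * (n+1)).factorial : ℝ) ≠ 0 := by positivity
  rw [show (2:ℝ) ^ n * (1/2 * (1 / (2 * (n+1)).factorial)) = (2 ^ (n+1) * (1/4)) / (2 * (n+1)).factorial by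
    rw [pow_succ]; field_simp; norm_num, Real.div_rpow (by positivity) (by positivity)]
  push_cast
  have : (((2 * (n+1)).factorial : ℝ)) ^ (1 / (2 * ((n:ℝ)+1))) ≠ 0 := by positivity
  field_simp

/-- (a) `vol Q(C_m)^(1/2m) → √2/π`; (b) `m * vol(Q(C_m) \ P(C_m))^(1/2m) → e/√2`. -/
theorem tendsto_root_volume_QSet_cycle :
    Tendsto (fun m : ℕ =>
      (volume (QSet (cycleG m))).toReal ^ (1 / (2 * (m : ℝ))))
      atTop (nhds (Real.sqrt 2 / Real.pi)) ∧
    Tendsto (fun m : ℕ =>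
      (m : ℝ) * (volume (QSet (cycleG m) \ BQPSet (cycleG m))).toReal ^
        (1 / (2 * (m : ℝ))))
      atTop (nhds (Real.exp 1 / Real.sqrt 2)) := by
  exact ⟨part_a, part_b⟩
end
end
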